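/- Let d > 2 be an integer and c₀ ∈ (0,1]. There exist δ_reg > 0 (one may take δ_reg = 2^{−9}) and c_reg > 0 depending only on (d, c₀) such that for every admissible kernel J on ℤ^d with constant c₀ and every G ∈ 𝒢 with (J,G) satisfying Assumption G, for every β < β(δ_reg), the effective random walk at parameter β (whose step variance is ξ(β)²) is (c_reg, 3)-regular. -/

import Mathlib

open scoped ENNReal

noncomputable section

namespace Blackbox

/-- Supremum norm of a lattice point. -/
def supNorm {d : ℕ} (x : Fin d → ℤ) : ℝ :=
  ((Finset.univ.sup fun i => (x i).natAbs : ℕ) : ℝ)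

/-- Squared Euclidean norm of a lattice point. -/
def sqNorm {d : ℕ} (x : Fin d → ℤ) : ℝ :=
  ∑ i, ((x i : ℝ)) ^ 2

/-- Invariance under coordinate permutations and sign flips of individual coordinates. -/
def IsSymmFun {d : ℕ} {α : Type*} (f : (Fin d → ℤ) → α) : Prop :=
  ∀ (π : Equiv.Perm (Fin d)) (e : Fin d → Bool) (x : Fin d → ℤ),
    f (fun i => (if e i then -1 else 1) * x (π i)) = f x

/-- First coordinate (dot product with `e₁`). -/
def e1 {d : ℕ} {α : Type*} [Zero α] (y : Fin d → α) : α :=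
  if h : 0 < d then y ⟨0, h⟩ else 0

/-- An admissible kernel on `ℤ^d` with constant `c₀`. -/
structure AdmissibleKernel (d : ℕ) (c₀ : ℝ) where
  J : (Fin d → ℤ) → ℝ
  nonneg : ∀ x, 0 ≤ J x
  zero_at_zero : J 0 = 0
  summable : Summable J
  norm_one : ∑' x, J x = 1
  symm : IsSymmFun J
  R : ℝ
  R_ge_one : 1 ≤ R
  range_le : ∀ x, 0 < J x → supNorm x ≤ R
  range_attained : ∃ x, 0 < J x ∧ supNorm x = R
  summable_sq : Summable fun x => sqNorm x * J x
  sigma_lower : c₀ * R ≤ Real.sqrt (∑' x, sqNorm x * J x)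
  J_upper : ∀ x, J x ≤ c₀⁻¹ / R ^ d

/-- `σ_J`, the square root of the variance of the kernel. -/
def AdmissibleKernel.sigma {d : ℕ} {c₀ : ℝ} (K : AdmissibleKernel d c₀) : ℝ :=
  Real.sqrt (∑' x, sqNorm x * K.J x)

/-- A family `G ∈ 𝒢` together with an admissible kernel `J` such that `(J,G)` satisfies
Assumption G (with error-term family `H`). -/
structure Model (d : ℕ) (c₀ : ℝ) where
  K : AdmissibleKernel d c₀
  G : ℝ → (Fin d → ℤ) → ℝ≥0∞
  βc : ℝ≥0∞
  βc_pos : 0 < βc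
  init : ∀ x, G 0 x = if x = 0 then 1 else 0
  G' : ℝ → (Fin d → ℤ) → ℝ
  mono : ∀ (x : Fin d → ℤ) ⦃β₁ β₂ : ℝ⦄, 0 ≤ β₁ → β₁ ≤ β₂ →
    ENNReal.ofReal β₂ ≤ βc → G β₁ x ≤ G β₂ x
  deriv : ∀ (x : Fin d → ℤ) ⦃β : ℝ⦄, 0 ≤ β → ENNReal.ofReal β < βc →
    HasDerivWithinAt (fun t => (G t x).toReal) (G' β x) (Set.Ici 0) β
  symm : ∀ β, IsSymmFun (G β)
  expDecay : ∀ ⦃β : ℝ⦄, 0 ≤ β → ENNReal.ofReal β < βc →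
    ∃ C > (0:ℝ), ∃ c > (0:ℝ), ∀ x, G β x ≤ ENNReal.ofReal (C * Real.exp (-c * supNorm x))
  limit : βc ≠ ⊤ → ∀ x, G βc.toReal x = ⨆ β ∈ Set.Ico (0 : ℝ) βc.toReal, G β x
  I1 : ∀ ⦃β' β : ℝ⦄, 0 ≤ β' → β' ≤ β → ENNReal.ofReal β < βc →
    ∀ x, G β x ≤ G β' x + ENNReal.ofReal (β - β') *
      ∑' p : (Fin d → ℤ) × (Fin d → ℤ),
        G β' p.1 * ENNReal.ofReal (K.J p.2) * G β (x - p.1 - p.2)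
  H : ℝ → (Fin d → ℤ) → ℝ
  H_nonneg : ∀ β x, 0 ≤ H β x
  H_zero : ∀ x, H 0 x = 0
  H_symm : ∀ β x, H β (-x) = H β x
  H_cont : ∀ x, ContinuousOn (fun β => H β x)
    {β : ℝ | 0 ≤ β ∧ ENNReal.ofReal β < βc}
  H_expDecay : ∀ ⦃β : ℝ⦄, 0 ≤ β → ENNReal.ofReal β < βc →
    ∃ C > (0:ℝ), ∃ c > (0:ℝ), ∀ x, H β x ≤ C * Real.exp (-c * supNorm x)
  I2 : ∀ ⦃β : ℝ⦄, 0 ≤ β → ENNReal.ofReal β < βc → ∀ x,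
    (∑' p : (Fin d → ℤ) × (Fin d → ℤ),
      (G β p.1).toReal * (K.J p.2 - H β p.2) * (G β (x - p.1 - p.2)).toReal)
      ≤ G' β x

namespace Model

variable {d : ℕ} {c₀ : ℝ}

def sigma (M : Model d c₀) : ℝ := M.K.sigma

/-- `F_β = J * G_β`. -/
def F (M : Model d c₀) (β : ℝ) (x : Fin d → ℤ) : ℝ≥0∞ :=
  ∑' y, ENNReal.ofReal (M.K.J y) * M.G β (x - y)

/-- The susceptibility `χ(β)`. -/
def chi (M : Model d c₀) (β : ℝ) : ℝ≥0∞ := ∑' x, M.G β x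

/-- `ξ(β)²`. -/
def xiSq (M : Model d c₀) (β : ℝ) : ℝ≥0∞ :=
  (∑' x, ENNReal.ofReal (sqNorm x) * M.F β x) / M.chi β

/-- The correlation length of order two, `ξ(β)`. -/
def xi (M : Model d c₀) (β : ℝ) : ℝ := Real.sqrt (M.xiSq β).toReal

/-- The error term `E(β)`. -/
def E (M : Model d c₀) (β : ℝ) : ℝ≥0∞ :=
  ⨆ t ∈ Set.Icc (0 : ℝ) β,
    (ENNReal.ofReal (∑' x, M.H t x) +
      ENNReal.ofReal (∑' x, sqNorm x * M.H t x) / M.xiSq t)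

/-- `β(δ)`. -/
def betaOf (M : Model d c₀) (δ : ℝ) : ℝ :=
  sSup {β : ℝ | 0 ≤ β ∧ ENNReal.ofReal β < M.βc ∧ M.E β < ENNReal.ofReal δ}

/-- One-step distribution of the effective random walk at parameter `β`. -/
def effStep (M : Model d c₀) (β : ℝ) (y : Fin d → ℤ) : ℝ≥0∞ :=
  M.F β y / M.chi β

/-- `k`-step distribution of the effective random walk at parameter `β`. -/
def effIter (M : Model d c₀) (β : ℝ) : ℕ → (Fin d → ℤ) → ℝ≥0∞
  | 0 => fun x => if x = 0 then 1 else 0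
  | n + 1 => fun x => ∑' y, M.effStep β y * M.effIter β n (x - y)

/-- Moment generating function `M_β(s)` of the first coordinate of one step of the
effective random walk. -/
def Mgf (M : Model d c₀) (β s : ℝ) : ℝ≥0∞ :=
  ∑' y : Fin d → ℤ, M.effStep β y * ENNReal.ofReal (Real.exp (s / M.xi β * ((e1 y : ℤ) : ℝ)))

end Model

end Blackbox
open Blackbox

/-!
Both inequalities of Assumption G are used in integrated form, summed against weights.
Against the constant weight they say that `1 / χ` decreases at a rate between `1 - δ` and `1`.
Against `σ_J² + |x|²`, the parallelogram law turns the lower inequality into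
`d log (χ ξ²) / dβ ≥ (2 - 3δ) χ`, up to replacing derivatives by increments; since
`d log χ / dβ ≤ χ`, the square `ξ²` grows at least like `χ ^ (1 - 3δ)`. Against `exp (u |x₁|)`,
which is submultiplicative, the upper inequality yields for the exponential moment `N(u)` of
`J` and `G` that `N_s(u) ≤ (129 / 128) χ_s` implies `N_t(u) ≤ 3 χ_t` as long as `χ_t ≤ 64 χ_s`.

To pass to the next scale, let `χ_t = 64 χ_s`, so that `r = ξ_s / ξ_t ≤ 2 / 15`. Expanding the
exponential to third order and using the second moment for the lower orders,
`N_s(c / ξ_t) ≤ (1 + 5c / 2) χ_s + r³ N_s(c / ξ_s)`. The factor `r³` beats the constant `3` of the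
previous scale, and the bound returns to `(129 / 128) χ_s`. The induction on scales starts from
`β = 0`, where `G = δ₀` and `J` has range at most `ξ / c₀`.
-/

namespace Blackbox

section Convolution

variable {α : Type*} [AddCommGroup α] {f g f' g' w : α → ℝ≥0∞}

/-- Convolution of `[0, ∞]`-valued functions on a commutative group, with respect to the counting
measure. -/
def conv (f g : α → ℝ≥0∞) (x : α) : ℝ≥0∞ := ∑' y, f y * g (x - y)

theorem conv_mono (hf : f ≤ f') (hg : g ≤ g') : conv f g ≤ conv f' g' :=
  fun x ↦ ENNReal.tsum_le_tsum fun y ↦ mul_le_mul' (hf y) (hg (x - y))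

theorem tsum_prod_mul_eq_conv_conv (f g h : α → ℝ≥0∞) (x : α) :
    ∑' p : α × α, f p.1 * g p.2 * h (x - p.1 - p.2) = conv f (conv g h) x := by
  simp only [ENNReal.tsum_prod', conv, mul_assoc, ENNReal.tsum_mul_left]

theorem tsum_mul_conv (w f g : α → ℝ≥0∞) :
    ∑' x, w x * conv f g x = ∑' y, ∑' z, w (y + z) * (f y * g z) := by
  simp only [conv, ← ENNReal.tsum_mul_left]
  rw [ENNReal.tsum_comm]
  refine tsum_congr fun y ↦ ?_
  rw [← (Equiv.addLeft y).tsum_eq]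
  simp

theorem tsum_conv (f g : α → ℝ≥0∞) : ∑' x, conv f g x = (∑' x, f x) * ∑' x, g x := by
  simpa [ENNReal.tsum_mul_left, ENNReal.tsum_mul_right] using tsum_mul_conv 1 f g

theorem tsum_mul_conv_le (hw : ∀ x y, w (x + y) ≤ w x * w y) (f g : α → ℝ≥0∞) :
    ∑' x, w x * conv f g x ≤ (∑' x, w x * f x) * ∑' x, w x * g x := by
  rw [tsum_mul_conv, ← ENNReal.tsum_mul_right]
  simp only [← ENNReal.tsum_mul_left]
  refine ENNReal.tsum_le_tsum fun y ↦ ENNReal.tsum_le_tsum fun z ↦ ?_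
  calc w (y + z) * (f y * g z) ≤ w y * w z * (f y * g z) := by gcongr; exact hw y z
    _ = w y * f y * (w z * g z) := by ring

end Convolution

section SubmultiplicativeWeight

variable {α : Type*} {w f : α → ℝ≥0∞}

theorem min_submultiplicative [Add α] (hw : ∀ x y, w (x + y) ≤ w x * w y) (hw₁ : ∀ x, 1 ≤ w x)
    {L : ℝ≥0∞} (hL : 1 ≤ L) (x y : α) : min (w (x + y)) L ≤ min (w x) L * min (w y) L := by
  rcases le_total (w x) L with hx | hx
  · rcases le_total (w y) L with hy | hy
    · simpa [hx, hy] using Or.inl (hw x y)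
    · simpa [hx, hy] using Or.inr (le_mul_of_one_le_left' (hw₁ x))
  · rw [min_eq_right hx]
    exact (min_le_right _ _).trans (le_mul_of_one_le_right' (le_min (hw₁ y) hL))

theorem tsum_mul_le_of_tsum_min_mul_le (hw : ∀ x, w x ≠ ∞) {B : ℝ≥0∞}
    (h : ∀ L : ℝ≥0∞, 1 ≤ L → L ≠ ∞ → ∑' x, min (w x) L * f x ≤ B) : ∑' x, w x * f x ≤ B := by
  rw [ENNReal.tsum_eq_iSup_sum]
  refine iSup_le fun S ↦ ?_
  have hL : 1 ⊔ S.sup w ≠ ∞ := by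
    rw [← lt_top_iff_ne_top, sup_lt_iff, Finset.sup_lt_iff ENNReal.zero_lt_top]
    exact ⟨ENNReal.one_lt_top, fun x _ ↦ (hw x).lt_top⟩
  calc ∑ x ∈ S, w x * f x = ∑ x ∈ S, min (w x) (1 ⊔ S.sup w) * f x :=
        Finset.sum_congr rfl fun x hx ↦ by
          rw [min_eq_left ((Finset.le_sup hx).trans le_sup_right)]
    _ ≤ ∑' x, min (w x) (1 ⊔ S.sup w) * f x := ENNReal.sum_le_tsum S
    _ ≤ B := h _ le_sup_left hL

theorem one_sub_mul_le_of_le_add_mul {a b c : ℝ≥0∞} (ha : a ≠ ∞) (h : a ≤ b + c * a) :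
    (1 - c) * a ≤ b := by
  rw [ENNReal.sub_mul fun _ _ ↦ ha, one_mul]
  exact tsub_le_iff_right.2 h

end SubmultiplicativeWeight

section Lattice

variable {d : ℕ} {f g : (Fin d → ℤ) → ℝ≥0∞}

theorem IsSymmFun.neg {α : Type*} {f : (Fin d → ℤ) → α} (hf : IsSymmFun f) (x : Fin d → ℤ) :
    f (-x) = f x := by
  simpa [Pi.neg_def] using hf 1 (fun _ ↦ true) x

/-- The action of a coordinate permutation and of sign flips on `ℤ^d`, as in `IsSymmFun`. -/
def signedPerm (π : Equiv.Perm (Fin d)) (e : Fin d → Bool) : (Fin d → ℤ) ≃ (Fin d → ℤ) :=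
  (Equiv.arrowCongr π.symm (Equiv.refl ℤ)).trans
    (Equiv.piCongrRight fun i ↦ if e i then Equiv.neg ℤ else Equiv.refl ℤ)

theorem signedPerm_apply (π : Equiv.Perm (Fin d)) (e : Fin d → Bool) (x : Fin d → ℤ) :
    signedPerm π e x = fun i ↦ (if e i then -1 else 1) * x (π i) := by
  funext i
  cases h : e i <;> simp [signedPerm, h]

theorem IsSymmFun.conv (hf : IsSymmFun f) (hg : IsSymmFun g) :
    IsSymmFun (conv f g) := by
  intro π e x
  rw [← signedPerm_apply, Blackbox.conv, ← (signedPerm π e).tsum_eq]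
  refine tsum_congr fun y ↦ ?_
  have map_sub : signedPerm π e x - signedPerm π e y = signedPerm π e (x - y) := by
    funext i
    simp [signedPerm_apply, mul_sub]
  rw [map_sub, signedPerm_apply, signedPerm_apply, hf, hg]

theorem supNorm_nonneg (x : Fin d → ℤ) : 0 ≤ supNorm x := by
  unfold supNorm; positivity

theorem abs_apply_le_supNorm (x : Fin d → ℤ) (i : Fin d) : |(x i : ℝ)| ≤ supNorm x := by
  rw [supNorm, ← Int.cast_abs, ← Nat.cast_natAbs]
  exact_mod_cast Finset.le_sup (f := fun j ↦ (x j).natAbs) (Finset.mem_univ i)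

theorem sqNorm_nonneg (x : Fin d → ℤ) : 0 ≤ sqNorm x := by
  unfold sqNorm; positivity

theorem sqNorm_le (x : Fin d → ℤ) : sqNorm x ≤ d * supNorm x ^ 2 := by
  calc sqNorm x ≤ ∑ _i : Fin d, supNorm x ^ 2 := by
        refine Finset.sum_le_sum fun i _ ↦ ?_
        rw [← sq_abs]
        gcongr
        exact abs_apply_le_supNorm x i
    _ = d * supNorm x ^ 2 := by simp

theorem sqNorm_parallelogram (x y : Fin d → ℤ) :
    sqNorm (x + y) + sqNorm (-x + y) = 2 * (sqNorm x + sqNorm y) := by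
  simp only [sqNorm, ← Finset.sum_add_distrib, Finset.mul_sum, Pi.add_apply, Pi.neg_apply]
  refine Finset.sum_congr rfl fun i _ ↦ ?_
  push_cast
  ring

/-- The second moment `∑ |x|² f(x)` of a `[0, ∞]`-valued function on `ℤ^d`. -/
def secondMoment (f : (Fin d → ℤ) → ℝ≥0∞) : ℝ≥0∞ := ∑' x, ENNReal.ofReal (sqNorm x) * f x

theorem secondMoment_conv (hf : ∀ x, f (-x) = f x) (g : (Fin d → ℤ) → ℝ≥0∞) :
    secondMoment (conv f g) =
      secondMoment f * (∑' x, g x) + (∑' x, f x) * secondMoment g := by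
  have parallelogram (x y : Fin d → ℤ) :
      ENNReal.ofReal (sqNorm (x + y)) + ENNReal.ofReal (sqNorm (-x + y)) =
        2 * (ENNReal.ofReal (sqNorm x) + ENNReal.ofReal (sqNorm y)) := by
    rw [← ENNReal.ofReal_add (sqNorm_nonneg _) (sqNorm_nonneg _), sqNorm_parallelogram,
      ENNReal.ofReal_mul zero_le_two, ENNReal.ofReal_add (sqNorm_nonneg _) (sqNorm_nonneg _)]
    simp
  have reflected : secondMoment (conv f g) =
      ∑' y, ∑' z, ENNReal.ofReal (sqNorm (-y + z)) * (f y * g z) := by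
    rw [secondMoment, tsum_mul_conv, ← (Equiv.neg (Fin d → ℤ)).tsum_eq]
    simp [hf]
  refine (ENNReal.mul_right_inj two_ne_zero ENNReal.ofNat_ne_top).1 ?_
  calc 2 * secondMoment (conv f g)
      = ∑' y, ∑' z, 2 * (ENNReal.ofReal (sqNorm y) + ENNReal.ofReal (sqNorm z)) *
          (f y * g z) := by
        rw [two_mul]
        nth_rw 2 [reflected]
        rw [secondMoment, tsum_mul_conv, ← ENNReal.tsum_add]
        simp_rw [← ENNReal.tsum_add, ← add_mul, parallelogram]
    _ = ∑' y, ∑' z, 2 * (ENNReal.ofReal (sqNorm y) * f y * g z +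
          f y * (ENNReal.ofReal (sqNorm z) * g z)) := by
        refine tsum_congr fun y ↦ tsum_congr fun z ↦ ?_
        ring
    _ = 2 * (secondMoment f * (∑' x, g x) + (∑' x, f x) * secondMoment g) := by
        simp only [secondMoment, ENNReal.tsum_mul_left, ENNReal.tsum_mul_right, ENNReal.tsum_add]

theorem tsum_pi_prod_eq_pow {β : Type*} (h : β → ℝ≥0∞) (d : ℕ) :
    ∑' x : Fin d → β, ∏ i, h (x i) = (∑' n, h n) ^ d := by
  induction d with
  | zero => simp [tsum_fintype]
  | succ n ih =>
    rw [← (Fin.consEquiv fun _ : Fin (n + 1) ↦ β).tsum_eq, ENNReal.tsum_prod', pow_succ', ← ih]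
    simp only [Fin.consEquiv, Equiv.coe_fn_mk, Fin.prod_univ_succ, Fin.cons_zero, Fin.cons_succ,
      ENNReal.tsum_mul_left, ENNReal.tsum_mul_right]

theorem tsum_int_exp_neg_mul_abs_ne_top {c : ℝ} (hc : 0 < c) :
    ∑' n : ℤ, ENNReal.ofReal (Real.exp (-c * |(n : ℝ)|)) ≠ ∞ := by
  have summable_nat : Summable fun n : ℕ ↦ Real.exp (-c * n) := by
    simpa only [mul_comm] using Real.summable_exp_nat_mul_iff.2 (neg_neg_of_pos hc)
  refine Summable.tsum_ofReal_ne_top (Summable.of_nat_of_neg ?_ ?_) <;> simpa using summable_nat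

theorem tsum_exp_neg_mul_supNorm_ne_top (d : ℕ) {c : ℝ} (hc : 0 < c) :
    ∑' x : Fin d → ℤ, ENNReal.ofReal (Real.exp (-c * supNorm x)) ≠ ∞ := by
  have product_ne_top :
      ∑' x : Fin d → ℤ, ∏ i, ENNReal.ofReal (Real.exp (-(c / (d + 1)) * |(x i : ℝ)|)) ≠ ∞ := by
    rw [tsum_pi_prod_eq_pow fun n : ℤ ↦ ENNReal.ofReal (Real.exp (-(c / (d + 1)) * |(n : ℝ)|))]
    exact ENNReal.pow_ne_top (tsum_int_exp_neg_mul_abs_ne_top (by positivity))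
  refine ne_top_of_le_ne_top product_ne_top (ENNReal.tsum_le_tsum fun x ↦ ?_)
  rw [← ENNReal.ofReal_prod_of_nonneg fun _ _ ↦ (Real.exp_pos _).le, ← Real.exp_sum,
    ← Finset.mul_sum]
  have sum_le : ∑ i, |(x i : ℝ)| ≤ (d + 1) * supNorm x := by
    calc ∑ i, |(x i : ℝ)| ≤ ∑ _i : Fin d, supNorm x :=
          Finset.sum_le_sum fun i _ ↦ abs_apply_le_supNorm x i
      _ ≤ (d + 1) * supNorm x := by
          rw [Finset.sum_const, Finset.card_fin, nsmul_eq_mul]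
          nlinarith [supNorm_nonneg x]
  refine ENNReal.ofReal_le_ofReal (Real.exp_le_exp.2 ?_)
  rw [neg_mul, neg_mul, neg_le_neg_iff, div_mul_eq_mul_div, div_le_iff₀ (by positivity)]
  calc c * ∑ i, |(x i : ℝ)| ≤ c * ((d + 1) * supNorm x) := by gcongr
    _ = c * supNorm x * (d + 1) := by ring

/-- Exponential decay of a function on `ℤ^d` at some positive rate. -/
def ExpDecay (f : (Fin d → ℤ) → ℝ≥0∞) : Prop :=
  ∃ C > (0 : ℝ), ∃ c > (0 : ℝ), ∀ x, f x ≤ ENNReal.ofReal (C * Real.exp (-c * supNorm x))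

theorem ExpDecay.ne_top (hf : ExpDecay f) (x : Fin d → ℤ) : f x ≠ ∞ := by
  obtain ⟨C, -, c, -, hle⟩ := hf
  exact ne_top_of_le_ne_top ENNReal.ofReal_ne_top (hle x)

theorem ExpDecay.tsum_supNorm_pow_mul_ne_top (hf : ExpDecay f) (n : ℕ) :
    ∑' x, ENNReal.ofReal (supNorm x ^ n) * f x ≠ ∞ := by
  obtain ⟨C, hC, c, hc, hle⟩ := hf
  have pow_le (x : Fin d → ℤ) :
      supNorm x ^ n ≤ (2 / c) ^ n * n.factorial * Real.exp (c / 2 * supNorm x) := by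
    have hx := supNorm_nonneg x
    have := Real.pow_div_factorial_le_exp (c / 2 * supNorm x) (by positivity) n
    rw [div_le_iff₀ (by positivity)] at this
    calc supNorm x ^ n = (2 / c) ^ n * (c / 2 * supNorm x) ^ n := by
          rw [← mul_pow]; congr 1; field_simp
      _ ≤ (2 / c) ^ n * (Real.exp (c / 2 * supNorm x) * n.factorial) := by gcongr
      _ = (2 / c) ^ n * n.factorial * Real.exp (c / 2 * supNorm x) := by ring
  refine ne_top_of_le_ne_top (ENNReal.mul_ne_top
    (ENNReal.ofReal_ne_top (r := (2 / c) ^ n * n.factorial * C))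
    (tsum_exp_neg_mul_supNorm_ne_top d (half_pos hc))) ?_
  rw [← ENNReal.tsum_mul_left]
  refine ENNReal.tsum_le_tsum fun x ↦ (mul_le_mul_right (hle x) _).trans ?_
  rw [← ENNReal.ofReal_mul (by positivity [supNorm_nonneg x]), ← ENNReal.ofReal_mul (by positivity)]
  refine ENNReal.ofReal_le_ofReal ?_
  calc supNorm x ^ n * (C * Real.exp (-c * supNorm x))
      ≤ (2 / c) ^ n * n.factorial * Real.exp (c / 2 * supNorm x) *
          (C * Real.exp (-c * supNorm x)) := by gcongr; exact pow_le x
    _ = (2 / c) ^ n * n.factorial * C *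
          (Real.exp (c / 2 * supNorm x) * Real.exp (-c * supNorm x)) := by ring
    _ = (2 / c) ^ n * n.factorial * C * Real.exp (-(c / 2) * supNorm x) := by
        rw [← Real.exp_add]; ring_nf

theorem ExpDecay.tsum_ne_top (hf : ExpDecay f) : ∑' x, f x ≠ ∞ := by
  simpa using hf.tsum_supNorm_pow_mul_ne_top 0

theorem ExpDecay.secondMoment_ne_top (hf : ExpDecay f) : secondMoment f ≠ ∞ := by
  refine ne_top_of_le_ne_top
    (ENNReal.mul_ne_top (ENNReal.natCast_ne_top d) (hf.tsum_supNorm_pow_mul_ne_top 2)) ?_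
  rw [← ENNReal.tsum_mul_left]
  refine ENNReal.tsum_le_tsum fun x ↦ ?_
  rw [← mul_assoc, ← ENNReal.ofReal_natCast, ← ENNReal.ofReal_mul (Nat.cast_nonneg d)]
  gcongr
  exact sqNorm_le x

end Lattice

section RealAnalysis

open Set Filter Topology

theorem le_of_le_add_sub_mul_of_diag_nonpos {Φ : ℝ → ℝ} {e : ℝ → ℝ → ℝ} {a b : ℝ} (hab : a ≤ b)
    (hΦ : ContinuousOn Φ (Icc a b)) (he : ∀ s ∈ Ico a b, ContinuousOn (e s) (Icc a b))
    (he_diag : ∀ s ∈ Ico a b, e s s ≤ 0)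
    (h : ∀ s ∈ Icc a b, ∀ t ∈ Icc a b, s < t → Φ t ≤ Φ s + (t - s) * e s t) : Φ b ≤ Φ a := by
  refine image_le_of_liminf_slope_right_le_deriv_boundary (B := fun _ ↦ Φ a) (B' := 0) hΦ le_rfl
    continuousOn_const (fun s _ ↦ hasDerivWithinAt_const s _ _) (fun s hs r hr ↦ ?_)
    (right_mem_Icc.2 hab)
  have tendsto_e : Tendsto (e s) (𝓝[>] s) (𝓝 (e s s)) := by
    rw [← nhdsWithin_Ioc_eq_nhdsGT hs.2]
    exact (he s hs s (Ico_subset_Icc_self hs)).mono_left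
      (nhdsWithin_mono _ fun t ht ↦ ⟨hs.1.trans ht.1.le, ht.2⟩)
  refine Eventually.frequently ?_
  filter_upwards [tendsto_e.eventually_lt_const ((he_diag s hs).trans_lt hr),
    Ioc_mem_nhdsGT hs.2] with t he_lt ht
  refine lt_of_le_of_lt ?_ he_lt
  rw [slope_def_field, div_le_iff₀ (sub_pos.2 ht.1)]
  linarith [h s (Ico_subset_Icc_self hs) t ⟨hs.1.trans ht.1.le, ht.2⟩ ht.1]

theorem one_sub_mul_le_one_div_sub_one_div {X : ℝ → ℝ} {δ a b : ℝ} (hab : a ≤ b)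
    (hX : ContinuousOn X (Icc a b)) (hX_pos : ∀ t ∈ Icc a b, 0 < X t)
    (h : ∀ s ∈ Icc a b, ∀ t ∈ Icc a b, s ≤ t →
      X s + (t - s) * (X s * X s) ≤ X t + (t - s) * (δ * (X t * X t))) :
    (1 - δ) * (b - a) ≤ 1 / X a - 1 / X b := by
  have X_ne_zero (t) (ht : t ∈ Icc a b) : X t ≠ 0 := (hX_pos t ht).ne'
  suffices (1 - δ) * b + 1 / X b ≤ (1 - δ) * a + 1 / X a by linarith
  refine le_of_le_add_sub_mul_of_diag_nonpos (Φ := fun t ↦ (1 - δ) * t + 1 / X t)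
    (e := fun s t ↦ 1 - δ + (δ * (X t * X t) - X s * X s) / (X s * X t)) hab
    ((continuousOn_const.mul continuousOn_id).add (continuousOn_const.div hX X_ne_zero))
    (fun s hs ↦ ?_) (fun s hs ↦ ?_) (fun s hs t ht hst ↦ ?_)
  · have hs' := X_ne_zero s (Ico_subset_Icc_self hs)
    exact continuousOn_const.add (((continuousOn_const.mul (hX.mul hX)).sub continuousOn_const).div
      (continuousOn_const.mul hX) fun t ht ↦ mul_ne_zero hs' (X_ne_zero t ht))
  · have hs' := X_ne_zero s (Ico_subset_Icc_self hs)
    refine le_of_eq ?_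
    field_simp
    ring
  · have hs' := hX_pos s hs
    have ht' := hX_pos t ht
    have inv_sub : 1 / X t - 1 / X s ≤
        (t - s) * ((δ * (X t * X t) - X s * X s) / (X s * X t)) := by
      rw [← mul_div_assoc, div_sub_div _ _ ht'.ne' hs'.ne', mul_comm (X t) (X s)]
      refine div_le_div_of_nonneg_right ?_ (mul_pos hs' ht').le
      linarith [h s hs t ht hst.le]
    linarith

theorem log_sub_log_le_of_le_add_mul {x y c : ℝ} (hx : 0 < x) (hy : 0 < y)
    (h : y ≤ x + c * x) : Real.log y - Real.log x ≤ c := by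
  rw [← Real.log_div hy.ne' hx.ne']
  refine (Real.log_le_sub_one_of_pos (div_pos hy hx)).trans ?_
  rw [div_sub_one hx.ne', div_le_iff₀ hx]
  linarith

theorem le_log_sub_log_of_add_mul_le {x y c : ℝ} (hx : 0 < x) (hy : 0 < y)
    (h : x + c * y ≤ y) : c ≤ Real.log y - Real.log x := by
  rw [← Real.log_div hy.ne' hx.ne']
  refine le_trans ?_ (Real.one_sub_inv_le_log_of_pos (div_pos hy hx))
  rw [inv_div, one_sub_div hy.ne', le_div_iff₀ hy]
  linarith

theorem rpow_div_le_div {X W : ℝ → ℝ} {k ε a b : ℝ} (hεk : ε ≤ k) (hab : a ≤ b)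
    (hX : ContinuousOn X (Icc a b)) (hX_pos : ∀ t ∈ Icc a b, 0 < X t)
    (hW : ContinuousOn W (Icc a b)) (hW_pos : ∀ t ∈ Icc a b, 0 < W t)
    (hX_le : ∀ s ∈ Icc a b, ∀ t ∈ Icc a b, s ≤ t → X t ≤ X s + (t - s) * (X s * X t))
    (hW_le : ∀ s ∈ Icc a b, ∀ t ∈ Icc a b, s ≤ t →
      W s + (t - s) * (k * (X s * W s)) ≤ W t + (t - s) * (ε * (X t * W t))) :
    (X b / X a) ^ (k - ε) ≤ W b / W a := by
  have haI := left_mem_Icc.2 hab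
  have hbI := right_mem_Icc.2 hab
  suffices h : (k - ε) * Real.log (X b) - Real.log (W b) ≤
      (k - ε) * Real.log (X a) - Real.log (W a) by
    rw [← Real.log_le_log_iff (Real.rpow_pos_of_pos (div_pos (hX_pos b hbI) (hX_pos a haI)) _)
      (div_pos (hW_pos b hbI) (hW_pos a haI)),
      Real.log_rpow (div_pos (hX_pos b hbI) (hX_pos a haI)),
      Real.log_div (hX_pos b hbI).ne' (hX_pos a haI).ne',
      Real.log_div (hW_pos b hbI).ne' (hW_pos a haI).ne']
    linarith
  refine le_of_le_add_sub_mul_of_diag_nonpos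
    (Φ := fun t ↦ (k - ε) * Real.log (X t) - Real.log (W t))
    (e := fun s t ↦ k * (X t - X s * W s / W t)) hab
    ((continuousOn_const.mul (hX.log fun t ht ↦ (hX_pos t ht).ne')).sub
      (hW.log fun t ht ↦ (hW_pos t ht).ne'))
    (fun s _ ↦ continuousOn_const.mul
      (hX.sub (continuousOn_const.div hW fun t ht ↦ (hW_pos t ht).ne')))
    (fun s hs ↦ ?_) (fun s hs t ht hst ↦ ?_)
  · rw [mul_div_cancel_right₀ _ (hW_pos s (Ico_subset_Icc_self hs)).ne']
    simp
  · have hXs := hX_pos s hs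
    have hXt := hX_pos t ht
    have hWs := hW_pos s hs
    have hWt := hW_pos t ht
    have log_X_le : Real.log (X t) - Real.log (X s) ≤ (t - s) * X t :=
      log_sub_log_le_of_le_add_mul hXs hXt (by linarith [hX_le s hs t ht hst.le])
    have le_log_W :
        (t - s) * (k * (X s * W s / W t) - ε * X t) ≤ Real.log (W t) - Real.log (W s) := by
      refine le_log_sub_log_of_add_mul_le hWs hWt ?_
      have cancel : (t - s) * (k * (X s * W s / W t) - ε * X t) * W t =
          (t - s) * (k * (X s * W s)) - (t - s) * (ε * (X t * W t)) := by
        field_simp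
      linarith [hW_le s hs t ht hst.le]
    have := mul_le_mul_of_nonneg_left log_X_le (sub_nonneg.2 hεk)
    linarith

theorem exp_mul_le_sum_add_pow_mul_exp {r t : ℝ} (hr₀ : 0 ≤ r) (hr₁ : r ≤ 1) (ht : 0 ≤ t) (k : ℕ) :
    Real.exp (r * t) ≤
      ∑ i ∈ Finset.range k, (r * t) ^ i / i.factorial + r ^ k * Real.exp t := by
  have exp_eq (u : ℝ) : Real.exp u = ∑' n : ℕ, u ^ n / n.factorial := by
    rw [Real.exp_eq_exp_ℝ, NormedSpace.exp_eq_tsum_div]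
  have exp_split (u : ℝ) := (Real.summable_pow_div_factorial u).sum_add_tsum_nat_add k
  have summable_tail (u : ℝ) := (summable_nat_add_iff k).2 (Real.summable_pow_div_factorial u)
  rw [exp_eq (r * t), ← exp_split]
  gcongr
  calc ∑' i : ℕ, (r * t) ^ (i + k) / (i + k).factorial
      ≤ ∑' i : ℕ, r ^ k * (t ^ (i + k) / (i + k).factorial) := by
        refine (summable_tail _).tsum_le_tsum (fun i ↦ ?_) ((summable_tail t).mul_left _)
        rw [mul_pow, mul_div_assoc]
        gcongr ?_ * _
        exact pow_le_pow_of_le_one hr₀ hr₁ (Nat.le_add_left k i)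
    _ = r ^ k * ∑' i : ℕ, t ^ (i + k) / (i + k).factorial := tsum_mul_left
    _ ≤ r ^ k * Real.exp t := by
        rw [exp_eq t, ← exp_split t]
        gcongr
        exact le_add_of_nonneg_left (Finset.sum_nonneg fun i _ ↦ by positivity)

theorem exp_mul_div_mul_add_le {r c ξ p q : ℝ} (hr₀ : 0 ≤ r) (hr₁ : r ≤ 1) (hc₀ : 0 ≤ c)
    (hc₁ : c ≤ 1) (hξ : 0 < ξ) (hp : 0 ≤ p) (hq : 0 ≤ q) :
    Real.exp (r * (c / ξ * (p + q))) ≤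
      1 + c / 2 + 2 * c / ξ ^ 2 * (p ^ 2 + q ^ 2) + r ^ 3 * Real.exp (c / ξ * (p + q)) := by
  set u := (p + q) / ξ with hu
  have u_nonneg : 0 ≤ u := by positivity
  have arg_eq : c / ξ * (p + q) = c * u := by rw [hu, div_mul_eq_mul_div, mul_div_assoc]
  have sq_le : u ^ 2 ≤ 2 * ((p ^ 2 + q ^ 2) / ξ ^ 2) := by
    rw [hu, div_pow, ← mul_div_assoc]
    gcongr
    linarith [sq_nonneg (p - q)]
  have taylor := exp_mul_le_sum_add_pow_mul_exp hr₀ hr₁ (mul_nonneg hc₀ u_nonneg) 3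
  simp only [Finset.sum_range_succ, Finset.sum_range_zero, Nat.factorial,
    Nat.cast_one, pow_zero, pow_one, zero_add, mul_one, div_one] at taylor
  have linear_le : r * (c * u) ≤ c * ((1 + u ^ 2) / 2) :=
    (mul_le_of_le_one_left (by positivity) hr₁).trans
      (mul_le_mul_of_nonneg_left (by linarith [sq_nonneg (u - 1)]) hc₀)
  have quadratic_le : (r * (c * u)) ^ 2 ≤ c * u ^ 2 := by
    rw [mul_pow, mul_pow]
    refine (mul_le_of_le_one_left (by positivity) (pow_le_one₀ hr₀ hr₁)).trans ?_
    gcongr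
    exact pow_le_of_le_one hc₀ hc₁ two_ne_zero
  have := mul_le_mul_of_nonneg_left sq_le hc₀
  rw [arg_eq, show 2 * c / ξ ^ 2 * (p ^ 2 + q ^ 2) = c * (2 * ((p ^ 2 + q ^ 2) / ξ ^ 2)) by ring]
  linarith

theorem mul_le_one_sub_mul_mul_three_mul {x y τ : ℝ} (hx : 0 < x) (hy : 0 < y) (hyx : y ≤ 64 * x)
    (hτ : (1 - 1 / 2 ^ 9) * τ ≤ 1 / x - 1 / y) :
    129 / 128 * x ≤ (1 - τ * (129 / 128 * x)) * (3 * y) := by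
  have mul_le : τ * (129 / 128 * x) ≤ 512 / 511 * (129 / 128) * (1 - x / y) := by
    have := mul_le_mul_of_nonneg_right hτ hx.le
    rw [sub_mul (1 / x), one_div_mul_cancel hx.ne', one_div_mul_eq_div] at this
    linarith
  have le_ratio : 1 / 64 ≤ x / y := by
    rw [div_le_div_iff₀ (by norm_num) hy]
    linarith
  calc 129 / 128 * x = 129 / 128 * (x / y) * y := by rw [mul_assoc, div_mul_cancel₀ _ hy.ne']
    _ ≤ (1 - τ * (129 / 128 * x)) * 3 * y := mul_le_mul_of_nonneg_right (by linarith) hy.le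
    _ = (1 - τ * (129 / 128 * x)) * (3 * y) := mul_assoc _ _ _

end RealAnalysis

section ExponentialWeight

variable {d : ℕ} {s : ℝ}

theorem abs_e1_add_le (x y : Fin d → ℤ) :
    |((e1 (x + y) : ℤ) : ℝ)| ≤ |((e1 x : ℤ) : ℝ)| + |((e1 y : ℤ) : ℝ)| := by
  unfold e1
  split
  · simpa using abs_add_le ((x _ : ℤ) : ℝ) (y _)
  · simp

theorem abs_e1_le_supNorm (x : Fin d → ℤ) : |((e1 x : ℤ) : ℝ)| ≤ supNorm x := by
  unfold e1
  split
  · exact abs_apply_le_supNorm x _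
  · simpa using supNorm_nonneg x

theorem sq_e1_le_sqNorm (x : Fin d → ℤ) : |((e1 x : ℤ) : ℝ)| ^ 2 ≤ sqNorm x := by
  unfold e1
  split
  · rw [sq_abs]
    exact Finset.single_le_sum (f := fun i ↦ (x i : ℝ) ^ 2) (fun i _ ↦ sq_nonneg _)
      (Finset.mem_univ _)
  · simpa using sqNorm_nonneg x

/-- The weight `exp (s |x₁|)`. Unlike `exp (s x₁)` it is at least `1` for `s ≥ 0`, so that its
truncations stay submultiplicative. -/
def expWeight (s : ℝ) (x : Fin d → ℤ) : ℝ≥0∞ :=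
  ENNReal.ofReal (Real.exp (s * |((e1 x : ℤ) : ℝ)|))

theorem expWeight_ne_top (s : ℝ) (x : Fin d → ℤ) : expWeight s x ≠ ∞ := ENNReal.ofReal_ne_top

theorem expWeight_zero (s : ℝ) : expWeight s (0 : Fin d → ℤ) = 1 := by
  simp [expWeight, e1]

theorem expWeight_mul_expWeight (s : ℝ) (x y : Fin d → ℤ) :
    expWeight s x * expWeight s y =
      ENNReal.ofReal (Real.exp (s * (|((e1 x : ℤ) : ℝ)| + |((e1 y : ℤ) : ℝ)|))) := by
  rw [expWeight, expWeight, ← ENNReal.ofReal_mul (Real.exp_nonneg _), ← Real.exp_add, mul_add]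

theorem expWeight_add_le (hs : 0 ≤ s) (x y : Fin d → ℤ) :
    expWeight s (x + y) ≤ expWeight s x * expWeight s y := by
  rw [expWeight_mul_expWeight, expWeight]
  gcongr
  exact abs_e1_add_le x y

theorem one_le_expWeight (hs : 0 ≤ s) (x : Fin d → ℤ) : 1 ≤ expWeight s x := by
  rw [expWeight, ENNReal.one_le_ofReal, Real.one_le_exp_iff]
  positivity

theorem expWeight_mul_expWeight_le {r c ξ : ℝ} (hr₀ : 0 ≤ r) (hr₁ : r ≤ 1) (hc₀ : 0 ≤ c)
    (hc₁ : c ≤ 1) (hξ : 0 < ξ) (x y : Fin d → ℤ) :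
    expWeight (r * (c / ξ)) x * expWeight (r * (c / ξ)) y ≤
      ENNReal.ofReal (1 + c / 2) + ENNReal.ofReal (2 * c / ξ ^ 2) *
          (ENNReal.ofReal (sqNorm x) + ENNReal.ofReal (sqNorm y)) +
        ENNReal.ofReal (r ^ 3) * (expWeight (c / ξ) x * expWeight (c / ξ) y) := by
  have sqNorm_add_nonneg := add_nonneg (sqNorm_nonneg x) (sqNorm_nonneg y)
  rw [expWeight_mul_expWeight, expWeight_mul_expWeight,
    ← ENNReal.ofReal_add (sqNorm_nonneg x) (sqNorm_nonneg y), ← ENNReal.ofReal_mul (by positivity),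
    ← ENNReal.ofReal_mul (by positivity), ← ENNReal.ofReal_add (by positivity) (by positivity),
    ← ENNReal.ofReal_add (by positivity) (by positivity), mul_assoc]
  refine ENNReal.ofReal_le_ofReal ((exp_mul_div_mul_add_le hr₀ hr₁ hc₀ hc₁ hξ (abs_nonneg _)
    (abs_nonneg _)).trans ?_)
  gcongr
  · exact sq_e1_le_sqNorm x
  · exact sq_e1_le_sqNorm y

end ExponentialWeight

section ENNReal

theorem tsum_ofReal_eq_ofReal_tsum {ι : Type*} {h : ι → ℝ} (h_nonneg : ∀ i, 0 ≤ h i)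
    (h_ne_top : ∑' i, ENNReal.ofReal (h i) ≠ ∞) :
    ∑' i, ENNReal.ofReal (h i) = ENNReal.ofReal (∑' i, h i) := by
  refine (ENNReal.ofReal_tsum_of_nonneg h_nonneg ?_).symm
  simpa only [ENNReal.toReal_ofReal (h_nonneg _)] using ENNReal.summable_toReal h_ne_top

theorem add_ofReal_mul_le_iff_toReal {a b c e : ℝ≥0∞} {r : ℝ} (hr : 0 ≤ r) (ha : a ≠ ∞)
    (hb : b ≠ ∞) (hc : c ≠ ∞) (he : e ≠ ∞) :
    a + ENNReal.ofReal r * b ≤ c + ENNReal.ofReal r * e ↔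
      a.toReal + r * b.toReal ≤ c.toReal + r * e.toReal := by
  have hrb := ENNReal.mul_ne_top (ENNReal.ofReal_ne_top (r := r)) hb
  have hre := ENNReal.mul_ne_top (ENNReal.ofReal_ne_top (r := r)) he
  rw [← ENNReal.toReal_le_toReal (ENNReal.add_ne_top.2 ⟨ha, hrb⟩) (ENNReal.add_ne_top.2 ⟨hc, hre⟩),
    ENNReal.toReal_add ha hrb, ENNReal.toReal_add hc hre, ENNReal.toReal_mul, ENNReal.toReal_mul,
    ENNReal.toReal_ofReal hr]

theorem toReal_sum_mul {ι : Type*} (S : Finset ι) {f g : ι → ℝ≥0∞} (hf : ∀ i, f i ≠ ∞)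
    (hg : ∀ i, g i ≠ ∞) :
    (∑ i ∈ S, f i * g i).toReal = ∑ i ∈ S, (f i).toReal * (g i).toReal := by
  rw [ENNReal.toReal_sum fun i _ ↦ ENNReal.mul_ne_top (hf i) (hg i)]
  simp only [ENNReal.toReal_mul]

end ENNReal

namespace Model

open Set

variable {d : ℕ} {c₀ : ℝ} {M : Model d c₀} {s t b δ : ℝ}

/-- The parameters `β ∈ [0, β_c)`. -/
def Subcritical (M : Model d c₀) (β : ℝ) : Prop := 0 ≤ β ∧ ENNReal.ofReal β < M.βc

theorem Subcritical.of_mem_Icc (hb : M.Subcritical b) (ht : t ∈ Icc 0 b) : M.Subcritical t :=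
  ⟨ht.1, (ENNReal.ofReal_le_ofReal ht.2).trans_lt hb.2⟩

/-- The kernel `J`, with values in `[0, ∞]`. -/
def kernel (M : Model d c₀) (x : Fin d → ℤ) : ℝ≥0∞ := ENNReal.ofReal (M.K.J x)

/-- The error function `H_t`, with values in `[0, ∞]`. -/
def err (M : Model d c₀) (t : ℝ) (x : Fin d → ℤ) : ℝ≥0∞ := ENNReal.ofReal (M.H t x)

theorem F_eq_conv (M : Model d c₀) (t : ℝ) : M.F t = conv M.kernel (M.G t) := rfl

theorem kernel_neg (M : Model d c₀) (x : Fin d → ℤ) : M.kernel (-x) = M.kernel x := by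
  rw [kernel, M.K.symm.neg, kernel]

theorem err_neg (M : Model d c₀) (t : ℝ) (x : Fin d → ℤ) : M.err t (-x) = M.err t x := by
  rw [err, M.H_symm, err]

theorem tsum_kernel (M : Model d c₀) : ∑' x, M.kernel x = 1 := by
  simp only [kernel]
  rw [← ENNReal.ofReal_tsum_of_nonneg M.K.nonneg M.K.summable, M.K.norm_one, ENNReal.ofReal_one]

theorem secondMoment_kernel (M : Model d c₀) :
    secondMoment M.kernel = ENNReal.ofReal (∑' x, sqNorm x * M.K.J x) := by
  rw [ENNReal.ofReal_tsum_of_nonneg (fun x ↦ mul_nonneg (sqNorm_nonneg x) (M.K.nonneg x))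
    M.K.summable_sq]
  simp only [secondMoment, kernel, ENNReal.ofReal_mul (sqNorm_nonneg _)]

theorem expDecay_G (ht : M.Subcritical t) : ExpDecay (M.G t) := M.expDecay ht.1 ht.2

theorem expDecay_err (ht : M.Subcritical t) : ExpDecay (M.err t) := by
  obtain ⟨C, hC, c, hc, hle⟩ := M.H_expDecay ht.1 ht.2
  exact ⟨C, hC, c, hc, fun x ↦ ENNReal.ofReal_le_ofReal (hle x)⟩

theorem chi_ne_top (ht : M.Subcritical t) : M.chi t ≠ ∞ := (expDecay_G ht).tsum_ne_top

theorem chi_zero (M : Model d c₀) : M.chi 0 = 1 := by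
  simp [chi, M.init]

theorem chi_mono (ht : M.Subcritical t) (hs : 0 ≤ s) (hst : s ≤ t) : M.chi s ≤ M.chi t :=
  ENNReal.tsum_le_tsum fun x ↦ M.mono x hs hst ht.2.le

theorem one_le_chi (ht : M.Subcritical t) : 1 ≤ M.chi t :=
  M.chi_zero ▸ chi_mono ht le_rfl ht.1

theorem one_le_toReal_chi (ht : M.Subcritical t) : 1 ≤ (M.chi t).toReal := by
  simpa using ENNReal.toReal_mono (chi_ne_top ht) (one_le_chi ht)

theorem chi_ne_zero (ht : M.Subcritical t) : M.chi t ≠ 0 :=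
  (zero_lt_one.trans_le (one_le_chi ht)).ne'

theorem tsum_conv_G_conv_G (M : Model d c₀) (s t : ℝ) (k : (Fin d → ℤ) → ℝ≥0∞) :
    ∑' x, conv (M.G s) (conv k (M.G t)) x = M.chi s * ((∑' x, k x) * M.chi t) := by
  rw [tsum_conv, tsum_conv, chi, chi]

section SecondMoment

theorem secondMoment_F (M : Model d c₀) (t : ℝ) :
    secondMoment (M.F t) = secondMoment M.kernel * M.chi t + secondMoment (M.G t) := by
  rw [F_eq_conv, secondMoment_conv M.kernel_neg, tsum_kernel, one_mul, chi]

theorem secondMoment_F_ne_top (ht : M.Subcritical t) : secondMoment (M.F t) ≠ ∞ := by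
  rw [secondMoment_F, secondMoment_kernel]
  exact ENNReal.add_ne_top.2
    ⟨ENNReal.mul_ne_top ENNReal.ofReal_ne_top (chi_ne_top ht), (expDecay_G ht).secondMoment_ne_top⟩

theorem secondMoment_F_mono (ht : M.Subcritical t) (hs : 0 ≤ s) (hst : s ≤ t) :
    secondMoment (M.F s) ≤ secondMoment (M.F t) :=
  ENNReal.tsum_le_tsum fun _ ↦ mul_le_mul_right
    (conv_mono le_rfl (fun x ↦ M.mono x hs hst ht.2.le) _) _

theorem xiSq_eq (M : Model d c₀) (t : ℝ) : M.xiSq t = secondMoment (M.F t) / M.chi t := rfl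

theorem xi_sq (M : Model d c₀) (t : ℝ) :
    M.xi t ^ 2 = (secondMoment (M.F t)).toReal / (M.chi t).toReal := by
  rw [xi, Real.sq_sqrt ENNReal.toReal_nonneg, xiSq_eq, ENNReal.toReal_div]

theorem xi_sq_mul_chi (ht : M.Subcritical t) :
    M.xi t ^ 2 * (M.chi t).toReal = (secondMoment (M.F t)).toReal := by
  rw [xi_sq, div_mul_cancel₀ _ (zero_lt_one.trans_le (one_le_toReal_chi ht)).ne']

theorem sigma_le_xi (ht : M.Subcritical t) : M.sigma ≤ M.xi t := by
  rw [xi, xiSq_eq, sigma, AdmissibleKernel.sigma]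
  refine Real.sqrt_le_sqrt ?_
  have h_ne_top := ENNReal.div_ne_top (secondMoment_F_ne_top ht) (chi_ne_zero ht)
  rw [← ENNReal.ofReal_le_iff_le_toReal h_ne_top, ← secondMoment_kernel,
    ENNReal.le_div_iff_mul_le (Or.inl (chi_ne_zero ht)) (Or.inl (chi_ne_top ht)), secondMoment_F]
  exact le_self_add

theorem mul_R_le_xi (ht : M.Subcritical t) : c₀ * M.K.R ≤ M.xi t :=
  M.K.sigma_lower.trans (sigma_le_xi ht)

theorem xi_pos (hc₀ : 0 < c₀) (ht : M.Subcritical t) : 0 < M.xi t :=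
  (mul_pos hc₀ (zero_lt_one.trans_le M.K.R_ge_one)).trans_le (mul_R_le_xi ht)

theorem xiSq_pos (hc₀ : 0 < c₀) (ht : M.Subcritical t) : 0 < M.xiSq t :=
  (ENNReal.toReal_pos_iff.1 (Real.sqrt_pos.1 (xi_pos hc₀ ht))).1

/-- The weight `σ_J² + |x|²`, whose sum against `G_t` is the second moment of `F_t`. -/
def momentWeight (M : Model d c₀) (x : Fin d → ℤ) : ℝ≥0∞ :=
  secondMoment M.kernel + ENNReal.ofReal (sqNorm x)

theorem momentWeight_ne_top (M : Model d c₀) (x : Fin d → ℤ) : M.momentWeight x ≠ ∞ := by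
  rw [momentWeight, secondMoment_kernel]
  exact ENNReal.add_ne_top.2 ⟨ENNReal.ofReal_ne_top, ENNReal.ofReal_ne_top⟩

theorem tsum_momentWeight_mul (M : Model d c₀) (f : (Fin d → ℤ) → ℝ≥0∞) :
    ∑' x, M.momentWeight x * f x = secondMoment M.kernel * (∑' x, f x) + secondMoment f := by
  simp only [momentWeight, add_mul, ENNReal.tsum_add, ENNReal.tsum_mul_left, secondMoment]

theorem tsum_momentWeight_mul_G (M : Model d c₀) (t : ℝ) :
    ∑' x, M.momentWeight x * M.G t x = secondMoment (M.F t) := by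
  rw [tsum_momentWeight_mul, secondMoment_F, chi]

theorem tsum_momentWeight_mul_conv {k : (Fin d → ℤ) → ℝ≥0∞} (hk : ∀ x, k (-x) = k x) (t : ℝ) :
    ∑' x, M.momentWeight x * conv (M.G t) (conv k (M.G t)) x =
      M.chi t * ((∑' x, k x) * (secondMoment (M.F t) + secondMoment (M.G t)) +
        secondMoment k * M.chi t) := by
  rw [tsum_momentWeight_mul, tsum_conv_G_conv_G, secondMoment_conv (M.symm t).neg, tsum_conv,
    secondMoment_conv hk, secondMoment_F, chi]
  ring

theorem tsum_momentWeight_mul_conv_kernel (M : Model d c₀) (t : ℝ) :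
    ∑' x, M.momentWeight x * conv (M.G t) (conv M.kernel (M.G t)) x =
      2 * (M.chi t * secondMoment (M.F t)) := by
  rw [tsum_momentWeight_mul_conv M.kernel_neg, tsum_kernel, secondMoment_F]
  ring

end SecondMoment

section ErrorTerm

theorem E_mono (hst : s ≤ t) : M.E s ≤ M.E t :=
  biSup_mono fun _ hu ↦ ⟨hu.1, hu.2.trans hst⟩

theorem tsum_err_add_secondMoment_err_div_le (hb : M.Subcritical b) (ht : t ∈ Icc 0 b) :
    ∑' x, M.err t x + secondMoment (M.err t) / M.xiSq t ≤ M.E b := by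
  have h_err := expDecay_err (hb.of_mem_Icc ht)
  have secondMoment_eq : secondMoment (M.err t) = ∑' x, ENNReal.ofReal (sqNorm x * M.H t x) := by
    simp only [secondMoment, err, ENNReal.ofReal_mul (sqNorm_nonneg _)]
  rw [secondMoment_eq, tsum_ofReal_eq_ofReal_tsum
    (fun x ↦ mul_nonneg (sqNorm_nonneg x) (M.H_nonneg t x)) (secondMoment_eq ▸
      h_err.secondMoment_ne_top)]
  unfold err
  rw [tsum_ofReal_eq_ofReal_tsum (M.H_nonneg t) h_err.tsum_ne_top]
  exact le_biSup (fun u ↦ ENNReal.ofReal (∑' x, M.H u x) +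
    ENNReal.ofReal (∑' x, sqNorm x * M.H u x) / M.xiSq u) ht

theorem tsum_err_le (hb : M.Subcritical b) (hE : M.E b ≤ ENNReal.ofReal δ) (ht : t ∈ Icc 0 b) :
    ∑' x, M.err t x ≤ ENNReal.ofReal δ :=
  le_self_add.trans ((tsum_err_add_secondMoment_err_div_le hb ht).trans hE)

theorem secondMoment_err_mul_chi_le (hc₀ : 0 < c₀) (hb : M.Subcritical b)
    (hE : M.E b ≤ ENNReal.ofReal δ) (ht : t ∈ Icc 0 b) :
    secondMoment (M.err t) * M.chi t ≤ ENNReal.ofReal δ * secondMoment (M.F t) := by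
  have ht' := hb.of_mem_Icc ht
  have h_div : secondMoment (M.err t) / M.xiSq t ≤ ENNReal.ofReal δ :=
    le_add_self.trans ((tsum_err_add_secondMoment_err_div_le hb ht).trans hE)
  rw [ENNReal.div_le_iff (xiSq_pos hc₀ ht').ne'
    (ENNReal.div_ne_top (secondMoment_F_ne_top ht') (chi_ne_zero ht')), xiSq_eq,
    ← mul_div_assoc] at h_div
  exact (ENNReal.le_div_iff_mul_le (Or.inl (chi_ne_zero ht')) (Or.inl (chi_ne_top ht'))).1 h_div

theorem tsum_momentWeight_mul_conv_err_le (hc₀ : 0 < c₀) (hb : M.Subcritical b)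
    (hE : M.E b ≤ ENNReal.ofReal δ) (ht : t ∈ Icc 0 b) :
    ∑' x, M.momentWeight x * conv (M.G t) (conv (M.err t) (M.G t)) x ≤
      3 * ENNReal.ofReal δ * (M.chi b * secondMoment (M.F b)) := by
  have G_le_F : secondMoment (M.G t) ≤ secondMoment (M.F t) := secondMoment_F M t ▸ le_add_self
  have chi_le := chi_mono hb ht.1 ht.2
  have F_le := secondMoment_F_mono hb ht.1 ht.2
  calc ∑' x, M.momentWeight x * conv (M.G t) (conv (M.err t) (M.G t)) x
      = M.chi t * ((∑' x, M.err t x) * (secondMoment (M.F t) + secondMoment (M.G t)) +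
          secondMoment (M.err t) * M.chi t) := tsum_momentWeight_mul_conv (M.err_neg t) t
    _ ≤ M.chi b * (ENNReal.ofReal δ * (secondMoment (M.F b) + secondMoment (M.F b)) +
          ENNReal.ofReal δ * secondMoment (M.F b)) := by
        refine mul_le_mul' chi_le (add_le_add (mul_le_mul' (tsum_err_le hb hE ht)
          (add_le_add F_le (G_le_F.trans F_le))) ?_)
        exact (secondMoment_err_mul_chi_le hc₀ hb hE ht).trans (by gcongr)
    _ = 3 * ENNReal.ofReal δ * (M.chi b * secondMoment (M.F b)) := by ring

end ErrorTerm

section IntegralInequalities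

variable {w : (Fin d → ℤ) → ℝ≥0∞}

theorem G_le_add (ht : M.Subcritical t) (hs : 0 ≤ s) (hst : s ≤ t) (x : Fin d → ℤ) :
    M.G t x ≤ M.G s x + ENNReal.ofReal (t - s) * conv (M.G s) (conv M.kernel (M.G t)) x := by
  rw [← tsum_prod_mul_eq_conv_conv]
  exact M.I1 hs hst ht.2 x

theorem tsum_mul_G_le (hw : ∀ x y, w (x + y) ≤ w x * w y) (ht : M.Subcritical t) (hs : 0 ≤ s)
    (hst : s ≤ t) :
    ∑' x, w x * M.G t x ≤ ∑' x, w x * M.G s x + ENNReal.ofReal (t - s) *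
      ((∑' x, w x * M.G s x) * ((∑' x, w x * M.kernel x) * ∑' x, w x * M.G t x)) := by
  calc ∑' x, w x * M.G t x
      ≤ ∑' x, (w x * M.G s x + ENNReal.ofReal (t - s) *
          (w x * conv (M.G s) (conv M.kernel (M.G t)) x)) := by
        refine ENNReal.tsum_le_tsum fun x ↦ ?_
        rw [mul_left_comm, ← mul_add]
        gcongr
        exact G_le_add ht hs hst x
    _ = ∑' x, w x * M.G s x + ENNReal.ofReal (t - s) *
          ∑' x, w x * conv (M.G s) (conv M.kernel (M.G t)) x := by
        rw [ENNReal.tsum_add, ENNReal.tsum_mul_left]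
    _ ≤ ∑' x, w x * M.G s x + ENNReal.ofReal (t - s) *
          ((∑' x, w x * M.G s x) * ((∑' x, w x * M.kernel x) * ∑' x, w x * M.G t x)) := by
        gcongr
        exact (tsum_mul_conv_le hw _ _).trans (by gcongr; exact tsum_mul_conv_le hw _ _)

theorem chi_le_chi_add (ht : M.Subcritical t) (hs : 0 ≤ s) (hst : s ≤ t) :
    M.chi t ≤ M.chi s + ENNReal.ofReal (t - s) * (M.chi s * M.chi t) := by
  simpa [chi, tsum_kernel] using
    tsum_mul_G_le (w := fun _ ↦ 1) (fun _ _ ↦ (one_mul _).ge) ht hs hst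

theorem one_sub_mul_tsum_mul_G_le (hw : ∀ x y, w (x + y) ≤ w x * w y) (hw₁ : ∀ x, 1 ≤ w x)
    (hw_top : ∀ x, w x ≠ ∞) (ht : M.Subcritical t) (hs : 0 ≤ s) (hst : s ≤ t) :
    (1 - ENNReal.ofReal (t - s) * ((∑' x, w x * M.kernel x) * ∑' x, w x * M.G s x)) *
      ∑' x, w x * M.G t x ≤ ∑' x, w x * M.G s x := by
  rw [← ENNReal.tsum_mul_left]
  simp only [mul_left_comm _ (w _)]
  -- Truncating the weight makes both sums finite, so that the term in `G_t` can be absorbed.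
  refine tsum_mul_le_of_tsum_min_mul_le hw_top fun L hL hL_top ↦ ?_
  have truncated_ne_top : ∑' x, min (w x) L * M.G t x ≠ ∞ := by
    refine ne_top_of_le_ne_top (ENNReal.mul_ne_top hL_top (chi_ne_top ht)) ?_
    rw [chi, ← ENNReal.tsum_mul_left]
    exact ENNReal.tsum_le_tsum fun x ↦ mul_le_mul_left (min_le_right _ _) _
  have min_le (f : (Fin d → ℤ) → ℝ≥0∞) : ∑' x, min (w x) L * f x ≤ ∑' x, w x * f x :=
    ENNReal.tsum_le_tsum fun x ↦ mul_le_mul_left (min_le_left _ _) _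
  simp only [mul_left_comm _ (_ - _ : ℝ≥0∞), ENNReal.tsum_mul_left]
  refine one_sub_mul_le_of_le_add_mul truncated_ne_top ?_
  calc ∑' x, min (w x) L * M.G t x
      ≤ ∑' x, min (w x) L * M.G s x + ENNReal.ofReal (t - s) *
          ((∑' x, min (w x) L * M.G s x) *
            ((∑' x, min (w x) L * M.kernel x) * ∑' x, min (w x) L * M.G t x)) :=
        tsum_mul_G_le (min_submultiplicative hw hw₁ hL) ht hs hst
    _ ≤ ∑' x, w x * M.G s x + ENNReal.ofReal (t - s) * ((∑' x, w x * M.G s x) *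
          ((∑' x, w x * M.kernel x) * ∑' x, min (w x) L * M.G t x)) := by
        gcongr ?_ + _ * (?_ * (?_ * _))
        all_goals exact min_le _
    _ = _ := by ring

theorem conv_G_conv_G_ne_top (ht : M.Subcritical t) {k : (Fin d → ℤ) → ℝ≥0∞}
    (hk : ∑' x, k x ≠ ∞) (x : Fin d → ℤ) : conv (M.G t) (conv k (M.G t)) x ≠ ∞ := by
  refine ne_top_of_le_ne_top ?_ (ENNReal.le_tsum x)
  rw [tsum_conv_G_conv_G]
  exact ENNReal.mul_ne_top (chi_ne_top ht) (ENNReal.mul_ne_top hk (chi_ne_top ht))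

theorem conv_kernel_ne_top (ht : M.Subcritical t) (x : Fin d → ℤ) :
    conv (M.G t) (conv M.kernel (M.G t)) x ≠ ∞ :=
  conv_G_conv_G_ne_top ht (M.tsum_kernel ▸ ENNReal.one_ne_top) x

theorem conv_err_ne_top (ht : M.Subcritical t) (x : Fin d → ℤ) :
    conv (M.G t) (conv (M.err t) (M.G t)) x ≠ ∞ :=
  conv_G_conv_G_ne_top ht (expDecay_err ht).tsum_ne_top x

theorem toReal_conv_kernel_le (ht : M.Subcritical t) (x : Fin d → ℤ) :
    (conv (M.G t) (conv M.kernel (M.G t)) x).toReal ≤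
      M.G' t x + (conv (M.G t) (conv (M.err t) (M.G t)) x).toReal := by
  have toReal_conv {k : (Fin d → ℤ) → ℝ} (hk : ∀ y, 0 ≤ k y)
      (h_ne_top : conv (M.G t) (conv (fun y ↦ ENNReal.ofReal (k y)) (M.G t)) x ≠ ∞) :
      HasSum (fun p : (Fin d → ℤ) × (Fin d → ℤ) ↦
        (M.G t p.1).toReal * k p.2 * (M.G t (x - p.1 - p.2)).toReal)
        (conv (M.G t) (conv (fun y ↦ ENNReal.ofReal (k y)) (M.G t)) x).toReal := by
    rw [← tsum_prod_mul_eq_conv_conv] at h_ne_top ⊢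
    rw [ENNReal.tsum_toReal_eq (ENNReal.ne_top_of_tsum_ne_top h_ne_top)]
    simpa only [ENNReal.toReal_mul, ENNReal.toReal_ofReal (hk _)] using
      (ENNReal.summable_toReal h_ne_top).hasSum
  have kernel_sum : HasSum _ (conv (M.G t) (conv M.kernel (M.G t)) x).toReal :=
    toReal_conv M.K.nonneg (conv_kernel_ne_top ht x)
  have err_sum : HasSum _ (conv (M.G t) (conv (M.err t) (M.G t)) x).toReal :=
    toReal_conv (M.H_nonneg t) (conv_err_ne_top ht x)
  rw [← sub_le_iff_le_add]
  refine le_trans (le_of_eq ?_) (M.I2 ht.1 ht.2 x)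
  rw [← (kernel_sum.sub err_sum).tsum_eq]
  simp only [mul_sub, sub_mul]

theorem toReal_sum_mul_conv_kernel_sub_le (S : Finset (Fin d → ℤ)) (hw : ∀ x, w x ≠ ∞)
    {B : ℝ≥0∞} (hB : B ≠ ∞) (ht : M.Subcritical t) (hs : 0 ≤ s) (hst : s ≤ t)
    (h_err : ∑ x ∈ S, w x * conv (M.G t) (conv (M.err t) (M.G t)) x ≤ B) :
    (∑ x ∈ S, w x * conv (M.G s) (conv M.kernel (M.G s)) x).toReal - B.toReal ≤
      ∑ x ∈ S, (w x).toReal * M.G' t x := by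
  have hs' := ht.of_mem_Icc ⟨hs, hst⟩
  have G_le : M.G s ≤ M.G t := fun x ↦ M.mono x hs hst ht.2.le
  have err_le := ENNReal.toReal_mono hB h_err
  rw [toReal_sum_mul S hw (conv_err_ne_top ht)] at err_le
  rw [sub_le_iff_le_add, toReal_sum_mul S hw (conv_kernel_ne_top hs')]
  refine le_trans ?_ (add_le_add_right err_le _)
  rw [← Finset.sum_add_distrib]
  refine Finset.sum_le_sum fun x _ ↦ ?_
  rw [← mul_add]
  gcongr
  exact (ENNReal.toReal_mono (conv_kernel_ne_top ht x)
    (conv_mono G_le (conv_mono le_rfl G_le) x)).trans (toReal_conv_kernel_le ht x)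

theorem hasDerivWithinAt_sum_mul_G (S : Finset (Fin d → ℤ)) (w : (Fin d → ℤ) → ℝ≥0∞)
    (ht : M.Subcritical t) :
    HasDerivWithinAt (fun u ↦ ∑ x ∈ S, (w x).toReal * (M.G u x).toReal)
      (∑ x ∈ S, (w x).toReal * M.G' t x) (Ici 0) t :=
  HasDerivWithinAt.fun_sum fun x _ ↦ (M.deriv x ht.1 ht.2).const_mul _

theorem sum_mul_G_add_le (S : Finset (Fin d → ℤ)) (hw : ∀ x, w x ≠ ∞) {B : ℝ≥0∞} (hB : B ≠ ∞)
    (ht : M.Subcritical t) (hs : 0 ≤ s) (hst : s ≤ t)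
    (h_err : ∀ τ ∈ Icc s t, ∑ x ∈ S, w x * conv (M.G τ) (conv (M.err τ) (M.G τ)) x ≤ B) :
    ∑ x ∈ S, w x * M.G s x +
        ENNReal.ofReal (t - s) * ∑ x ∈ S, w x * conv (M.G s) (conv M.kernel (M.G s)) x ≤
      ∑ x ∈ S, w x * M.G t x + ENNReal.ofReal (t - s) * B := by
  have subcritical {τ} (hτ : τ ∈ Icc s t) : M.Subcritical τ :=
    ht.of_mem_Icc ⟨hs.trans hτ.1, hτ.2⟩
  have hs' := subcritical (left_mem_Icc.2 hst)
  have sum_ne_top {f : (Fin d → ℤ) → ℝ≥0∞} (hf : ∀ x, f x ≠ ∞) : ∑ x ∈ S, w x * f x ≠ ∞ :=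
    ENNReal.sum_ne_top.2 fun x _ ↦ ENNReal.mul_ne_top (hw x) (hf x)
  have hasDeriv {τ} (hτ : τ ∈ Icc s t) := hasDerivWithinAt_sum_mul_G S w (subcritical hτ)
  have hasDerivAt {τ} (hτ : τ ∈ interior (Icc s t)) :=
    (hasDeriv (interior_subset hτ)).hasDerivAt
      (Ici_mem_nhds (hs.trans_lt (interior_Icc (a := s) ▸ hτ).1))
  have mean_value := (convex_Icc s t).mul_sub_le_image_sub_of_le_deriv
    (fun τ hτ ↦ (hasDeriv hτ).continuousWithinAt.mono fun u hu ↦ hs.trans hu.1)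
    (fun τ hτ ↦ (hasDerivAt hτ).differentiableAt.differentiableWithinAt)
    (fun τ hτ ↦ (hasDerivAt hτ).deriv ▸ toReal_sum_mul_conv_kernel_sub_le S hw hB
      (subcritical (interior_subset hτ)) hs (interior_subset hτ).1 (h_err τ (interior_subset hτ)))
    s (left_mem_Icc.2 hst) t (right_mem_Icc.2 hst) hst
  rw [add_ofReal_mul_le_iff_toReal (sub_nonneg.2 hst) (sum_ne_top (expDecay_G hs').ne_top)
    (sum_ne_top (conv_kernel_ne_top hs')) (sum_ne_top (expDecay_G ht).ne_top) hB,
    toReal_sum_mul S hw (expDecay_G hs').ne_top, toReal_sum_mul S hw (expDecay_G ht).ne_top]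
  linarith

theorem tsum_mul_G_add_le (hw : ∀ x, w x ≠ ∞) {B : ℝ≥0∞} (hB : B ≠ ∞) (ht : M.Subcritical t)
    (hs : 0 ≤ s) (hst : s ≤ t)
    (h_err : ∀ τ ∈ Icc s t, ∑' x, w x * conv (M.G τ) (conv (M.err τ) (M.G τ)) x ≤ B) :
    ∑' x, w x * M.G s x +
        ENNReal.ofReal (t - s) * ∑' x, w x * conv (M.G s) (conv M.kernel (M.G s)) x ≤
      ∑' x, w x * M.G t x + ENNReal.ofReal (t - s) * B := by
  rw [← ENNReal.tsum_mul_left, ← ENNReal.tsum_add, ENNReal.tsum_eq_iSup_sum]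
  refine iSup_le fun S ↦ ?_
  rw [Finset.sum_add_distrib, ← Finset.mul_sum]
  refine (sum_mul_G_add_le S hw hB ht hs hst fun τ hτ ↦
    (ENNReal.sum_le_tsum S).trans (h_err τ hτ)).trans ?_
  gcongr
  exact ENNReal.sum_le_tsum S

theorem continuousOn_toReal_tsum_mul_G (hw : ∀ x, w x ≠ ∞) (hb : M.Subcritical b)
    (h_ne_top : ∑' x, w x * M.G b x ≠ ∞) :
    ContinuousOn (fun t ↦ (∑' x, w x * M.G t x).toReal) (Icc 0 b) := by
  have tsum_toReal (t) (ht : t ∈ Icc 0 b) : (∑' x, w x * M.G t x).toReal =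
      ∑' x, (w x).toReal * (M.G t x).toReal := by
    simp only [← ENNReal.toReal_mul]
    exact ENNReal.tsum_toReal_eq fun x ↦
      ENNReal.mul_ne_top (hw x) ((expDecay_G (hb.of_mem_Icc ht)).ne_top x)
  refine ContinuousOn.congr (continuousOn_tsum (fun x ↦ continuousOn_const.mul fun t ht ↦ ?_)
    (ENNReal.summable_toReal h_ne_top) fun x t ht ↦ ?_) tsum_toReal
  · exact (M.deriv x ht.1 (hb.of_mem_Icc ht).2).continuousWithinAt.mono Icc_subset_Ici_self
  · change ‖(w x).toReal * (M.G t x).toReal‖ ≤ (w x * M.G b x).toReal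
    rw [Real.norm_of_nonneg (mul_nonneg ENNReal.toReal_nonneg ENNReal.toReal_nonneg),
      ENNReal.toReal_mul]
    gcongr
    · exact (expDecay_G hb).ne_top x
    · exact M.mono x ht.1 ht.2 hb.2.le

end IntegralInequalities

section Growth

theorem toReal_chi_le_add (ht : M.Subcritical t) (hs : 0 ≤ s) (hst : s ≤ t) :
    (M.chi t).toReal ≤ (M.chi s).toReal + (t - s) * ((M.chi s).toReal * (M.chi t).toReal) := by
  have hχs := chi_ne_top (ht.of_mem_Icc ⟨hs, hst⟩)
  have hχt := chi_ne_top ht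
  have := (add_ofReal_mul_le_iff_toReal (b := 0) (sub_nonneg.2 hst) hχt ENNReal.zero_ne_top hχs
    (ENNReal.mul_ne_top hχs hχt)).1 (by simpa using chi_le_chi_add ht hs hst)
  simpa [ENNReal.toReal_mul] using this

theorem toReal_chi_add_le (hδ : 0 ≤ δ) (ht : M.Subcritical t) (hE : M.E t ≤ ENNReal.ofReal δ)
    (hs : 0 ≤ s) (hst : s ≤ t) :
    (M.chi s).toReal + (t - s) * ((M.chi s).toReal * (M.chi s).toReal) ≤
      (M.chi t).toReal + (t - s) * (δ * ((M.chi t).toReal * (M.chi t).toReal)) := by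
  have hχs := chi_ne_top (ht.of_mem_Icc ⟨hs, hst⟩)
  have hχt := chi_ne_top ht
  have h_sq := ENNReal.mul_ne_top hχt hχt
  have h_err (τ) (hτ : τ ∈ Icc s t) :
      ∑' x, 1 * conv (M.G τ) (conv (M.err τ) (M.G τ)) x ≤
        ENNReal.ofReal δ * (M.chi t * M.chi t) := by
    have chi_le_chi := chi_mono ht (hs.trans hτ.1) hτ.2
    simp only [one_mul, tsum_conv_G_conv_G]
    rw [mul_left_comm]
    exact mul_le_mul' (tsum_err_le ht hE ⟨hs.trans hτ.1, hτ.2⟩)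
      (mul_le_mul' chi_le_chi chi_le_chi)
  have integrated := tsum_mul_G_add_le (fun _ ↦ ENNReal.one_ne_top)
    (ENNReal.mul_ne_top ENNReal.ofReal_ne_top h_sq) ht hs hst h_err
  simp only [one_mul, tsum_conv_G_conv_G, tsum_kernel] at integrated
  have := (add_ofReal_mul_le_iff_toReal (sub_nonneg.2 hst) hχs (ENNReal.mul_ne_top hχs hχs) hχt
    (ENNReal.mul_ne_top ENNReal.ofReal_ne_top h_sq)).1 integrated
  simpa only [ENNReal.toReal_mul, ENNReal.toReal_ofReal hδ] using this

theorem toReal_secondMoment_add_le (hc₀ : 0 < c₀) (hδ : 0 ≤ δ) (ht : M.Subcritical t)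
    (hE : M.E t ≤ ENNReal.ofReal δ) (hs : 0 ≤ s) (hst : s ≤ t) :
    (secondMoment (M.F s)).toReal +
        (t - s) * (2 * ((M.chi s).toReal * (secondMoment (M.F s)).toReal)) ≤
      (secondMoment (M.F t)).toReal +
        (t - s) * (3 * δ * ((M.chi t).toReal * (secondMoment (M.F t)).toReal)) := by
  have hs' := ht.of_mem_Icc ⟨hs, hst⟩
  have product_ne_top {u} (hu : M.Subcritical u) : M.chi u * secondMoment (M.F u) ≠ ∞ :=
    ENNReal.mul_ne_top (chi_ne_top hu) (secondMoment_F_ne_top hu)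
  have hB : 3 * ENNReal.ofReal δ * (M.chi t * secondMoment (M.F t)) ≠ ∞ :=
    ENNReal.mul_ne_top (ENNReal.mul_ne_top ENNReal.ofNat_ne_top ENNReal.ofReal_ne_top)
      (product_ne_top ht)
  have integrated := tsum_mul_G_add_le M.momentWeight_ne_top hB ht hs hst fun τ hτ ↦
    tsum_momentWeight_mul_conv_err_le hc₀ ht hE ⟨hs.trans hτ.1, hτ.2⟩
  rw [tsum_momentWeight_mul_G, tsum_momentWeight_mul_G, tsum_momentWeight_mul_conv_kernel]
    at integrated
  have := (add_ofReal_mul_le_iff_toReal (sub_nonneg.2 hst) (secondMoment_F_ne_top hs')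
    (ENNReal.mul_ne_top ENNReal.ofNat_ne_top (product_ne_top hs')) (secondMoment_F_ne_top ht)
    hB).1 integrated
  simpa only [ENNReal.toReal_mul, ENNReal.toReal_ofReal hδ, ENNReal.toReal_ofNat] using this

theorem continuousOn_toReal_chi (hb : M.Subcritical b) :
    ContinuousOn (fun t ↦ (M.chi t).toReal) (Icc 0 b) := by
  simpa only [chi, one_mul] using continuousOn_toReal_tsum_mul_G (w := fun _ ↦ 1)
    (fun _ ↦ ENNReal.one_ne_top) hb (by simpa only [chi, one_mul] using chi_ne_top hb)

theorem continuousOn_toReal_secondMoment_F (hb : M.Subcritical b) :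
    ContinuousOn (fun t ↦ (secondMoment (M.F t)).toReal) (Icc 0 b) := by
  simpa only [tsum_momentWeight_mul_G] using
    continuousOn_toReal_tsum_mul_G M.momentWeight_ne_top hb
      (M.tsum_momentWeight_mul_G b ▸ secondMoment_F_ne_top hb)

theorem one_sub_mul_le_one_div_chi_sub (hδ : 0 ≤ δ) (hb : M.Subcritical b)
    (hE : M.E b ≤ ENNReal.ofReal δ) (hs : 0 ≤ s) (hsb : s ≤ b) :
    (1 - δ) * (b - s) ≤ 1 / (M.chi s).toReal - 1 / (M.chi b).toReal :=
  have mem {t} (ht : t ∈ Icc s b) : t ∈ Icc 0 b := ⟨hs.trans ht.1, ht.2⟩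
  one_sub_mul_le_one_div_sub_one_div hsb
    ((continuousOn_toReal_chi hb).mono (Icc_subset_Icc_left hs))
    (fun _ ht ↦ zero_lt_one.trans_le (one_le_toReal_chi (hb.of_mem_Icc (mem ht))))
    fun _ hu _ ht hut ↦ toReal_chi_add_le hδ (hb.of_mem_Icc (mem ht))
      ((E_mono ht.2).trans hE) (mem hu).1 hut

theorem rpow_chi_div_chi_le (hc₀ : 0 < c₀) (hδ : 0 ≤ δ) (hδ' : 3 * δ ≤ 2) (hb : M.Subcritical b)
    (hE : M.E b ≤ ENNReal.ofReal δ) (hs : 0 ≤ s) (hsb : s ≤ b) :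
    ((M.chi b).toReal / (M.chi s).toReal) ^ (2 - 3 * δ) ≤
      (secondMoment (M.F b)).toReal / (secondMoment (M.F s)).toReal := by
  have mem {t} (ht : t ∈ Icc s b) : t ∈ Icc 0 b := ⟨hs.trans ht.1, ht.2⟩
  have subcritical {t} (ht : t ∈ Icc s b) : M.Subcritical t := hb.of_mem_Icc (mem ht)
  have chi_pos {t} (ht : t ∈ Icc s b) : 0 < (M.chi t).toReal :=
    zero_lt_one.trans_le (one_le_toReal_chi (subcritical ht))
  refine rpow_div_le_div hδ' hsb
    ((continuousOn_toReal_chi hb).mono (Icc_subset_Icc_left hs)) (fun _ ht ↦ chi_pos ht)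
    ((continuousOn_toReal_secondMoment_F hb).mono (Icc_subset_Icc_left hs)) (fun t ht ↦ ?_)
    (fun u hu t ht hut ↦ toReal_chi_le_add (subcritical ht) (mem hu).1 hut)
    fun u hu t ht hut ↦ toReal_secondMoment_add_le hc₀ hδ (subcritical ht)
      ((E_mono ht.2).trans hE) (mem hu).1 hut
  rw [← xi_sq_mul_chi (subcritical ht)]
  exact mul_pos (pow_pos (xi_pos hc₀ (subcritical ht)) 2) (chi_pos ht)

theorem rpow_chi_div_chi_mul_xi_sq_le (hc₀ : 0 < c₀) (hδ : 0 ≤ δ) (hδ' : 3 * δ ≤ 2)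
    (hb : M.Subcritical b) (hE : M.E b ≤ ENNReal.ofReal δ) (hs : 0 ≤ s) (hsb : s ≤ b) :
    ((M.chi b).toReal / (M.chi s).toReal) ^ (1 - 3 * δ) * M.xi s ^ 2 ≤ M.xi b ^ 2 := by
  have hs' := hb.of_mem_Icc ⟨hs, hsb⟩
  have hχs := zero_lt_one.trans_le (one_le_toReal_chi hs')
  have hχb := zero_lt_one.trans_le (one_le_toReal_chi hb)
  have ratio_pos := div_pos hχb hχs
  have growth := rpow_chi_div_chi_le hc₀ hδ hδ' hb hE hs hsb
  rw [← xi_sq_mul_chi hb, ← xi_sq_mul_chi hs', mul_div_mul_comm,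
    show (2 - 3 * δ : ℝ) = 1 - 3 * δ + 1 by ring, Real.rpow_add_one ratio_pos.ne',
    mul_le_mul_iff_left₀ ratio_pos, le_div_iff₀ (pow_pos (xi_pos hc₀ hs') 2)] at growth
  exact growth

theorem xi_le_of_chi_eq_mul (hc₀ : 0 < c₀) (hb : M.Subcritical b)
    (hE : M.E b ≤ ENNReal.ofReal (1 / 2 ^ 9)) (hs : 0 ≤ s) (hsb : s ≤ b)
    (hχ : (M.chi b).toReal = 64 * (M.chi s).toReal) : M.xi s ≤ 2 / 15 * M.xi b := by
  have hs' := hb.of_mem_Icc ⟨hs, hsb⟩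
  have growth := rpow_chi_div_chi_mul_xi_sq_le hc₀ (by positivity) (by norm_num) hb hE hs hsb
  rw [hχ, mul_div_cancel_right₀ _ (zero_lt_one.trans_le (one_le_toReal_chi hs')).ne'] at growth
  have sq_le_rpow : (15 / 2 : ℝ) ^ 2 ≤ 64 ^ (1 - 3 * (1 / 2 ^ 9) : ℝ) :=
    calc (15 / 2 : ℝ) ^ 2 ≤ 64 ^ ((35 : ℕ) * ((36 : ℕ) : ℝ)⁻¹) := by
          rw [Real.rpow_mul (by norm_num), Real.rpow_natCast,
            Real.le_rpow_inv_iff_of_pos (by norm_num) (by norm_num) (by norm_num),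
            Real.rpow_natCast]
          norm_num
      _ ≤ 64 ^ (1 - 3 * (1 / 2 ^ 9) : ℝ) :=
          Real.rpow_le_rpow_of_exponent_le (by norm_num) (by norm_num)
  suffices h : (15 / 2 * M.xi s) ^ 2 ≤ M.xi b ^ 2 by
    linarith [le_of_sq_le_sq h (xi_pos hc₀ hb).le]
  rw [mul_pow]
  exact (mul_le_mul_of_nonneg_right sq_le_rpow (sq_nonneg _)).trans growth

theorem exists_chi_eq_mul_chi (hb : M.Subcritical b) {y : ℝ} (hy : 1 ≤ y)
    (hyb : y ≤ (M.chi b).toReal) : ∃ s ∈ Icc 0 b, (M.chi b).toReal = y * (M.chi s).toReal := by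
  have hy_pos := zero_lt_one.trans_le hy
  have mem : (M.chi b).toReal / y ∈ Icc (M.chi 0).toReal (M.chi b).toReal := by
    rw [M.chi_zero, ENNReal.toReal_one]
    exact ⟨(one_le_div₀ hy_pos).2 hyb, div_le_self ENNReal.toReal_nonneg hy⟩
  obtain ⟨s, hs, hχs : (M.chi s).toReal = _⟩ :=
    intermediate_value_Icc hb.1 (continuousOn_toReal_chi hb) mem
  exact ⟨s, hs, by rw [hχs, mul_div_cancel₀ _ hy_pos.ne']⟩

end Growth

section ExponentialMoment

variable {r c u : ℝ}

/-- The product of the sums of `exp (s |x₁|)` against `J` and `G_β`. It dominates the exponential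
moment of `F_β`, and is the quantity that appears when the upper integral inequality is tested
against that weight. -/
def expMoment (M : Model d c₀) (β s : ℝ) : ℝ≥0∞ :=
  (∑' x, expWeight s x * M.kernel x) * ∑' x, expWeight s x * M.G β x

theorem one_sub_mul_expMoment_le (hu : 0 ≤ u) (ht : M.Subcritical t) (hs : 0 ≤ s) (hst : s ≤ t) :
    (1 - ENNReal.ofReal (t - s) * M.expMoment s u) * M.expMoment t u ≤ M.expMoment s u := by
  rw [expMoment, expMoment, mul_left_comm]
  gcongr
  exact one_sub_mul_tsum_mul_G_le (expWeight_add_le hu) (one_le_expWeight hu) (expWeight_ne_top u)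
    ht hs hst

theorem expMoment_le_three_mul_chi (hu : 0 ≤ u) (ht : M.Subcritical t)
    (hE : M.E t ≤ ENNReal.ofReal (1 / 2 ^ 9)) (hs : 0 ≤ s) (hst : s ≤ t)
    (hχ : (M.chi t).toReal ≤ 64 * (M.chi s).toReal)
    (h_s : M.expMoment s u ≤ ENNReal.ofReal (129 / 128) * M.chi s) :
    M.expMoment t u ≤ 3 * M.chi t := by
  have hs' := ht.of_mem_Icc ⟨hs, hst⟩
  have step_le := one_sub_mul_le_one_div_chi_sub (by positivity) ht hE hs hst
  have hχs := zero_lt_one.trans_le (one_le_toReal_chi hs')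
  have hχt := zero_lt_one.trans_le (one_le_toReal_chi ht)
  rw [← ENNReal.ofReal_toReal (chi_ne_top hs'), ← ENNReal.ofReal_mul (by norm_num)] at h_s
  set x := (M.chi s).toReal
  set y := (M.chi t).toReal
  have h_real : 129 / 128 * x ≤ (1 - (t - s) * (129 / 128 * x)) * (3 * y) :=
    mul_le_one_sub_mul_mul_three_mul hχs hχt hχ step_le
  have h_pos : 0 < 1 - (t - s) * (129 / 128 * x) :=
    pos_of_mul_pos_left (lt_of_lt_of_le (by positivity) h_real) (by positivity)
  have h_ofReal : ENNReal.ofReal (1 - (t - s) * (129 / 128 * x)) ≤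
      1 - ENNReal.ofReal (t - s) * M.expMoment s u := by
    rw [ENNReal.ofReal_sub _ (mul_nonneg (sub_nonneg.2 hst) (by positivity)), ENNReal.ofReal_one,
      ENNReal.ofReal_mul (sub_nonneg.2 hst)]
    gcongr
  refine (ENNReal.mul_le_mul_iff_right (ENNReal.ofReal_pos.2 h_pos).ne' ENNReal.ofReal_ne_top).1 ?_
  calc ENNReal.ofReal (1 - (t - s) * (129 / 128 * x)) * M.expMoment t u
      ≤ (1 - ENNReal.ofReal (t - s) * M.expMoment s u) * M.expMoment t u := by gcongr
    _ ≤ ENNReal.ofReal (129 / 128 * x) :=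
        (one_sub_mul_expMoment_le hu ht hs hst).trans h_s
    _ ≤ ENNReal.ofReal ((1 - (t - s) * (129 / 128 * x)) * (3 * y)) :=
        ENNReal.ofReal_le_ofReal h_real
    _ = ENNReal.ofReal (1 - (t - s) * (129 / 128 * x)) * (3 * M.chi t) := by
        rw [ENNReal.ofReal_mul h_pos.le, ENNReal.ofReal_mul (by norm_num), ENNReal.ofReal_ofNat,
          ENNReal.ofReal_toReal (chi_ne_top ht)]

theorem expMoment_eq_tsum_tsum (M : Model d c₀) (β s : ℝ) :
    M.expMoment β s =
      ∑' y, ∑' z, expWeight s y * expWeight s z * (M.kernel y * M.G β z) := by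
  rw [expMoment, ← ENNReal.tsum_mul_right]
  simp only [← ENNReal.tsum_mul_left]
  refine tsum_congr fun y ↦ tsum_congr fun z ↦ ?_
  ring

theorem tsum_tsum_kernel_mul_G (M : Model d c₀) (t : ℝ) :
    ∑' y, ∑' z, M.kernel y * M.G t z = M.chi t := by
  simp only [ENNReal.tsum_mul_left, ENNReal.tsum_mul_right, tsum_kernel, one_mul, chi]

theorem tsum_tsum_sqNorm_add_sqNorm_mul (M : Model d c₀) (t : ℝ) :
    ∑' y, ∑' z, (ENNReal.ofReal (sqNorm y) + ENNReal.ofReal (sqNorm z)) *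
      (M.kernel y * M.G t z) = secondMoment (M.F t) := by
  calc ∑' y, ∑' z, (ENNReal.ofReal (sqNorm y) + ENNReal.ofReal (sqNorm z)) *
        (M.kernel y * M.G t z)
      = ∑' y, ∑' z, (ENNReal.ofReal (sqNorm y) * M.kernel y * M.G t z +
          M.kernel y * (ENNReal.ofReal (sqNorm z) * M.G t z)) :=
        tsum_congr fun y ↦ tsum_congr fun z ↦ by ring
    _ = secondMoment M.kernel * M.chi t + (∑' y, M.kernel y) * secondMoment (M.G t) := by
        simp only [ENNReal.tsum_add, ENNReal.tsum_mul_left, ENNReal.tsum_mul_right, secondMoment,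
          chi]
    _ = secondMoment (M.F t) := by rw [tsum_kernel, one_mul, secondMoment_F]

theorem expMoment_mul_div_xi_le (hc₀ : 0 < c₀) (hr₀ : 0 ≤ r) (hr₁ : r ≤ 1) (hc_nonneg : 0 ≤ c)
    (hc₁ : c ≤ 1) (ht : M.Subcritical t) :
    M.expMoment t (r * (c / M.xi t)) ≤
      ENNReal.ofReal (1 + 5 / 2 * c) * M.chi t +
        ENNReal.ofReal (r ^ 3) * M.expMoment t (c / M.xi t) := by
  have hξ := xi_pos hc₀ ht
  have h_chi : secondMoment (M.F t) = ENNReal.ofReal (M.xi t ^ 2) * M.chi t := by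
    rw [← ENNReal.ofReal_toReal (secondMoment_F_ne_top ht), ← xi_sq_mul_chi ht,
      ENNReal.ofReal_mul (sq_nonneg _), ENNReal.ofReal_toReal (chi_ne_top ht)]
  calc M.expMoment t (r * (c / M.xi t))
      ≤ ∑' y, ∑' z, (ENNReal.ofReal (1 + c / 2) + ENNReal.ofReal (2 * c / M.xi t ^ 2) *
            (ENNReal.ofReal (sqNorm y) + ENNReal.ofReal (sqNorm z)) +
          ENNReal.ofReal (r ^ 3) * (expWeight (c / M.xi t) y * expWeight (c / M.xi t) z)) *
            (M.kernel y * M.G t z) := by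
        rw [expMoment_eq_tsum_tsum]
        refine ENNReal.tsum_le_tsum fun y ↦ ENNReal.tsum_le_tsum fun z ↦ ?_
        gcongr
        exact expWeight_mul_expWeight_le hr₀ hr₁ hc_nonneg hc₁ hξ y z
    _ = ENNReal.ofReal (1 + c / 2) * M.chi t +
          ENNReal.ofReal (2 * c / M.xi t ^ 2) * secondMoment (M.F t) +
          ENNReal.ofReal (r ^ 3) * M.expMoment t (c / M.xi t) := by
        rw [expMoment_eq_tsum_tsum, ← tsum_tsum_sqNorm_add_sqNorm_mul, ← tsum_tsum_kernel_mul_G]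
        simp only [add_mul, mul_assoc, ENNReal.tsum_add, ENNReal.tsum_mul_left]
    _ = ENNReal.ofReal (1 + 5 / 2 * c) * M.chi t +
          ENNReal.ofReal (r ^ 3) * M.expMoment t (c / M.xi t) := by
        rw [h_chi, ← mul_assoc, ← ENNReal.ofReal_mul (by positivity),
          div_mul_cancel₀ _ (pow_pos hξ 2).ne', ← add_mul,
          ← ENNReal.ofReal_add (by positivity) (by positivity)]
        ring_nf

theorem expMoment_zero_le (hu : 0 ≤ u) (huR : u * M.K.R ≤ 1 / 2 ^ 12) :
    M.expMoment 0 u ≤ ENNReal.ofReal (129 / 128) * M.chi 0 := by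
  have tsum_G_zero : ∑' x, expWeight u x * M.G 0 x = 1 := by
    simp [M.init, expWeight_zero]
  have weighted_kernel_le (x : Fin d → ℤ) :
      expWeight u x * M.kernel x ≤ ENNReal.ofReal (Real.exp (1 / 2 ^ 12)) * M.kernel x := by
    rcases (M.K.nonneg x).eq_or_lt with hx | hx
    · simp [kernel, ← hx]
    · rw [expWeight]
      gcongr
      refine le_trans ?_ huR
      gcongr
      exact (abs_e1_le_supNorm x).trans (M.K.range_le x hx)
  have exp_le : Real.exp (1 / 2 ^ 12) ≤ 129 / 128 := by
    rw [← Real.le_log_iff_exp_le (by norm_num)]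
    exact le_trans (by norm_num) (Real.one_sub_inv_le_log_of_pos (by norm_num))
  rw [expMoment, tsum_G_zero, chi_zero]
  gcongr
  calc ∑' x, expWeight u x * M.kernel x
      ≤ ∑' x, ENNReal.ofReal (Real.exp (1 / 2 ^ 12)) * M.kernel x :=
        ENNReal.tsum_le_tsum weighted_kernel_le
    _ = ENNReal.ofReal (Real.exp (1 / 2 ^ 12)) := by
        rw [ENNReal.tsum_mul_left, tsum_kernel, mul_one]
    _ ≤ ENNReal.ofReal (129 / 128) := ENNReal.ofReal_le_ofReal exp_le

theorem expMoment_le_of_chi_le (hc₀ : 0 < c₀) (ht : M.Subcritical t)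
    (hE : M.E t ≤ ENNReal.ofReal (1 / 2 ^ 9)) (hχ : (M.chi t).toReal ≤ 64) (hc : 0 ≤ c)
    (hcc₀ : c ≤ c₀ / 2 ^ 12) : M.expMoment t (c / M.xi t) ≤ 3 * M.chi t := by
  have hξ := xi_pos hc₀ ht
  refine expMoment_le_three_mul_chi (by positivity) ht hE le_rfl ht.1 (by simpa [chi_zero])
    (expMoment_zero_le (by positivity) ?_)
  rw [div_mul_eq_mul_div, div_le_iff₀ hξ]
  have hR := zero_lt_one.trans_le M.K.R_ge_one
  calc c * M.K.R ≤ c₀ / 2 ^ 12 * M.K.R := by gcongr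
    _ = 1 / 2 ^ 12 * (c₀ * M.K.R) := by ring
    _ ≤ 1 / 2 ^ 12 * M.xi t := by
        gcongr
        exact mul_R_le_xi ht

theorem expMoment_le_of_expMoment_le (hc₀ : 0 < c₀) (ht : M.Subcritical t)
    (hE : M.E t ≤ ENNReal.ofReal (1 / 2 ^ 9)) (hs : 0 ≤ s) (hst : s ≤ t)
    (hχ : (M.chi t).toReal = 64 * (M.chi s).toReal) (hc : 0 ≤ c) (hc₁ : c ≤ 1 / 2 ^ 12)
    (h_s : M.expMoment s (c / M.xi s) ≤ 3 * M.chi s) :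
    M.expMoment t (c / M.xi t) ≤ 3 * M.chi t := by
  have hs' := ht.of_mem_Icc ⟨hs, hst⟩
  have hξs := xi_pos hc₀ hs'
  have hξt := xi_pos hc₀ ht
  set r := M.xi s / M.xi t with hr
  have r_le : r ≤ 2 / 15 := (div_le_iff₀ hξt).2 (xi_le_of_chi_eq_mul hc₀ ht hE hs hst hχ)
  have arg_eq : c / M.xi t = r * (c / M.xi s) := by
    rw [hr, div_mul_div_comm, mul_comm (M.xi s), mul_div_mul_right _ _ hξs.ne']
  have interpolated : M.expMoment s (c / M.xi t) ≤ ENNReal.ofReal (129 / 128) * M.chi s :=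
    calc M.expMoment s (c / M.xi t)
        ≤ ENNReal.ofReal (1 + 5 / 2 * c) * M.chi s +
            ENNReal.ofReal (r ^ 3) * M.expMoment s (c / M.xi s) := by
          rw [arg_eq]
          exact expMoment_mul_div_xi_le hc₀ (by positivity) (by linarith) hc (by linarith) hs'
      _ ≤ ENNReal.ofReal (1 + 5 / 2 * c) * M.chi s +
            ENNReal.ofReal ((2 / 15) ^ 3) * (3 * M.chi s) := by gcongr
      _ = ENNReal.ofReal (1 + 5 / 2 * c + (2 / 15) ^ 3 * 3) * M.chi s := by
          rw [← mul_assoc, ← add_mul,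
            ENNReal.ofReal_add (by positivity : 0 ≤ 1 + 5 / 2 * c) (by positivity),
            ENNReal.ofReal_mul (by positivity : (0 : ℝ) ≤ (2 / 15) ^ 3), ENNReal.ofReal_ofNat]
      _ ≤ ENNReal.ofReal (129 / 128) * M.chi s := by
          gcongr
          linarith
  exact expMoment_le_three_mul_chi (by positivity) ht hE hs hst hχ.le interpolated

theorem expMoment_div_xi_le (hc₀ : 0 < c₀) (hc : 0 ≤ c) (hcc₀ : c ≤ c₀ / 2 ^ 12)
    (hc₁ : c ≤ 1 / 2 ^ 12) (ht : M.Subcritical t) (hE : M.E t ≤ ENNReal.ofReal (1 / 2 ^ 9)) :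
    M.expMoment t (c / M.xi t) ≤ 3 * M.chi t := by
  obtain ⟨n, hn⟩ := pow_unbounded_of_one_lt (M.chi t).toReal (y := (64 : ℝ)) (by norm_num)
  induction n generalizing t with
  | zero => exact expMoment_le_of_chi_le hc₀ ht hE (by linarith) hc hcc₀
  | succ n ih =>
    rcases le_total (M.chi t).toReal 64 with hχ | hχ
    · exact expMoment_le_of_chi_le hc₀ ht hE hχ hc hcc₀
    · obtain ⟨s, hs, hχs⟩ := exists_chi_eq_mul_chi ht (by norm_num) hχ
      have chi_s_lt : (M.chi s).toReal < 64 ^ n := by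
        rw [hχs, pow_succ'] at hn
        linarith
      exact expMoment_le_of_expMoment_le hc₀ ht hE hs.1 hs.2 hχs hc hc₁
        (ih (ht.of_mem_Icc hs) ((E_mono hs.2).trans hE) chi_s_lt)

end ExponentialMoment

section EffectiveWalk

theorem isSymmFun_effStep (M : Model d c₀) (β : ℝ) : IsSymmFun (M.effStep β) := by
  have kernel_symm : IsSymmFun M.kernel := fun π e x ↦ by
    rw [kernel, kernel, M.K.symm]
  intro π e x
  rw [effStep, effStep, F_eq_conv, kernel_symm.conv (M.symm β)]

theorem Mgf_le_expMoment_div_chi {c : ℝ} (hc : 0 ≤ c) (β : ℝ) :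
    M.Mgf β c ≤ M.expMoment β (c / M.xi β) / M.chi β := by
  have hu : 0 ≤ c / M.xi β := div_nonneg hc (Real.sqrt_nonneg _)
  calc M.Mgf β c
      ≤ ∑' y, expWeight (c / M.xi β) y * conv M.kernel (M.G β) y / M.chi β := by
        refine ENNReal.tsum_le_tsum fun y ↦ ?_
        rw [effStep, mul_comm, ← mul_div_assoc, F_eq_conv, expWeight]
        gcongr
        exact le_abs_self _
    _ = (∑' y, expWeight (c / M.xi β) y * conv M.kernel (M.G β) y) / M.chi β := by
        simp only [div_eq_mul_inv, ENNReal.tsum_mul_right]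
    _ ≤ M.expMoment β (c / M.xi β) / M.chi β := by
        gcongr
        exact tsum_mul_conv_le (expWeight_add_le hu) _ _

theorem subcritical_and_E_le_of_lt_betaOf {β : ℝ} (hβ : 0 ≤ β) (hlt : β < M.betaOf δ) :
    M.Subcritical β ∧ M.E β ≤ ENNReal.ofReal δ := by
  have nonempty :
      {β : ℝ | 0 ≤ β ∧ ENNReal.ofReal β < M.βc ∧ M.E β < ENNReal.ofReal δ}.Nonempty := by
    by_contra h
    rw [betaOf, not_nonempty_iff_eq_empty.1 h, Real.sSup_empty] at hlt
    exact hβ.not_gt hlt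
  obtain ⟨b, ⟨hb, hb_lt, hEb⟩, hβb⟩ := exists_lt_of_lt_csSup nonempty hlt
  exact ⟨Subcritical.of_mem_Icc ⟨hb, hb_lt⟩ ⟨hβ, hβb.le⟩, (E_mono hβb.le).trans hEb.le⟩

end EffectiveWalk

end Model

end Blackbox

theorem statement11_general {d : ℕ} {c₀ : ℝ} (hc₀ : 0 < c₀) (M : Model d c₀) {β : ℝ} (hβ : 0 ≤ β)
    (hlt : β < M.betaOf (1 / 2 ^ 9)) :
    IsSymmFun (M.effStep β) ∧ M.Mgf β (min 1 c₀ / 2 ^ 12) ≤ 3 := by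
  obtain ⟨hβ', hE⟩ := Model.subcritical_and_E_le_of_lt_betaOf hβ hlt
  have hc : 0 ≤ min 1 c₀ / 2 ^ 12 := by positivity
  have expMoment_le : M.expMoment β (min 1 c₀ / 2 ^ 12 / M.xi β) ≤ 3 * M.chi β :=
    Model.expMoment_div_xi_le hc₀ hc (by gcongr; exact min_le_right 1 c₀)
      (by gcongr; exact min_le_left 1 c₀) hβ' hE
  exact ⟨M.isSymmFun_effStep β, (Model.Mgf_le_expMoment_div_chi hc β).trans
    (ENNReal.div_le_of_le_mul expMoment_le)⟩

/-- uniform regularity of the effective random walk below `β(δ_reg)`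
(`prop: regularity below beta(delta)`). -/
theorem statement11 (d : ℕ) (hd : 2 < d) (c₀ : ℝ) (hc₀ : c₀ ∈ Set.Ioc (0:ℝ) 1) :
    ∃ δreg > (0:ℝ), ∃ creg > (0:ℝ), ∀ M : Model d c₀, ∀ β : ℝ, 0 ≤ β → β < M.betaOf δreg →
      IsSymmFun (M.effStep β) ∧ M.Mgf β creg ≤ 3 := by
  have creg_pos : 0 < min 1 c₀ / 2 ^ 12 := div_pos (lt_min one_pos hc₀.1) (by norm_num)
  exact ⟨1 / 2 ^ 9, by norm_num, _, creg_pos, fun M _ ↦ statement11_general hc₀.1 M⟩
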